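/- arXiv:1608.08443 — 2 statements merged into one kernel-verified Lean document; each statement's English description precedes it below -/
import Mathlib

section
/- Let s ∈ (0,1), let Ω = ∪_{i=1}^M (a_i,b_i) where the closed intervals [a_i,b_i] are pairwise disjoint, let u ∈ C²₀(Ω) be such that |u'| is integrable on Ω, and let x ∈ ℝ with x ∉ {a_1,b_1,…,a_M,b_M}. Then (−Δ)^s u(x) exists and: (i) if s ≠ 1/2, the function F(x) = Σ_{i=1}^M ∫_{a_i}^{b_i} |x−y|^{1−2s} u'(y) dy is differentiable at x and (−Δ)^s u(x) = C_s F'(x); (ii) if s = 1/2, the function G(x) = Σ_{i=1}^M ∫_{a_i}^{b_i} ln|x−y| u'(y) dy is differentiable at x and (−Δ)^{1/2} u(x) = (1/π) G'(x). -/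
open MeasureTheory Filter Set

/-- The normalization constant `C₁(s) = 2^{2s} s Γ(s+1/2) / (√π Γ(1−s))`. -/
noncomputable def C1 (s : ℝ) : ℝ :=
  2 ^ (2 * s) * s * Real.Gamma (s + 1 / 2) / (Real.sqrt Real.pi * Real.Gamma (1 - s))

/-- The constant `C_s = C₁(s)/(2s(1−2s))`. -/
noncomputable def Cs (s : ℝ) : ℝ := C1 s / (2 * s * (1 - 2 * s))

/-- `HasFracLap s u x V` means the limit defining `(−Δ)^s u (x)` exists and equals `V`. -/
def HasFracLap (s : ℝ) (u : ℝ → ℝ) (x V : ℝ) : Prop :=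
  Filter.Tendsto
    (fun ε : ℝ => C1 s * ∫ y in {y : ℝ | ε ≤ |y|}, (u x - u (x - y)) * |y| ^ (-1 - 2 * s))
    (nhdsWithin 0 (Set.Ioi 0)) (nhds V)

/-! Let `w(y) = 2u(x) - u(x - y) - u(x + y)`. Folding `y` and `-y` together turns the truncated
integral into `∫_ε^∞ w(y) y^(-1-2s) dy`. Since `w'(y) = u'(x - y) - u'(x + y)`, integrating by parts
turns its limit into `(1/2s) ∫_0^∞ y^(-2s) w'(y) dy`; the boundary term dies because
`|w(ε)| ε^(-2s) ≤ ∫_0^ε y^(-2s) |w'(y)| dy`.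

On the other side, let `K` be `|z|^(1-2s)` or `log |z|`, so that `K'(y) = c y^(-2s)` for `y > 0`.
The derivative of `K * u'` at `x` is the principal value of `K' * u'`, which is
`c ∫_0^∞ y^(-2s) w'(y) dy`. To see this, cut `u'` into a compactly supported `C¹` piece, where the
derivative falls on that piece and one integrates by parts, and a piece vanishing near `x`, where
one differentiates under the integral sign. -/

open scoped Function NNReal Topology

section SingularFTC

variable {w q : ℝ → ℝ} {a C ε : ℝ} {E : Set ℝ}

lemma integral_Ioi_of_hasDerivAt_off_countable_of_tendsto {F : Type*} [NormedAddCommGroup F]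
    [NormedSpace ℝ F] [CompleteSpace F] {f f' : ℝ → F} {m : F} (hE : E.Countable)
    (hcont : ContinuousOn f (Ici a)) (hderiv : ∀ y ∈ Ioi a \ E, HasDerivAt f (f' y) y)
    (f'int : IntegrableOn f' (Ioi a)) (hf : Tendsto f atTop (𝓝 m)) :
    ∫ y in Ioi a, f' y = m - f a := by
  refine tendsto_nhds_unique (intervalIntegral_tendsto_integral_Ioi a f'int tendsto_id) ?_
  refine (hf.sub_const (f a)).congr' ?_
  filter_upwards [eventually_ge_atTop a] with T hT
  exact (integral_eq_of_hasDerivAt_off_countable_of_le f f' hT hE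
    (hcont.mono Icc_subset_Ici_self) (fun y hy => hderiv y ⟨hy.1.1, hy.2⟩)
    ((intervalIntegrable_iff_integrableOn_Ioc_of_le hT).2
      (f'int.mono_set Ioc_subset_Ioi_self))).symm

lemma norm_rpow_mul_le_norm_rpow_neg_mul {y : ℝ} (ha : 0 ≤ a) (hy : y ∈ Ioc 0 ε) (r : ℝ) :
    ‖ε ^ (-a) * r‖ ≤ ‖y ^ (-a) * r‖ := by
  have hε : 0 < ε := hy.1.trans_le hy.2
  rw [norm_mul, norm_mul, Real.norm_of_nonneg (by positivity),
    Real.norm_of_nonneg (Real.rpow_nonneg hy.1.le _)]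
  gcongr ?_ * _
  exact Real.rpow_le_rpow_of_nonpos hy.1 hy.2 (neg_nonpos.2 ha)

lemma integrableOn_Ioc_of_rpow_neg_mul (ha : 0 ≤ a)
    (hq : IntegrableOn (fun y => y ^ (-a) * q y) (Ioc 0 ε)) : IntegrableOn q (Ioc 0 ε) := by
  have hbdd : ∀ᵐ y ∂volume.restrict (Ioc 0 ε), ‖y ^ a‖ ≤ ε ^ a := by
    filter_upwards [ae_restrict_mem measurableSet_Ioc] with y hy
    rw [Real.norm_of_nonneg (Real.rpow_nonneg hy.1.le _)]
    exact Real.rpow_le_rpow hy.1.le hy.2 ha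
  have hmul : IntegrableOn (fun y => y ^ a * (y ^ (-a) * q y)) (Ioc 0 ε) :=
    hq.bdd_mul (Measurable.aestronglyMeasurable (by fun_prop)) hbdd
  refine hmul.congr_fun (fun y hy => ?_) measurableSet_Ioc
  simp only [← mul_assoc, ← Real.rpow_add hy.1, add_neg_cancel, Real.rpow_zero, one_mul]

lemma norm_mul_rpow_neg_le_setIntegral (ha : 0 ≤ a) (hε : 0 < ε) (hE : E.Countable)
    (hcont : ContinuousOn w (Icc 0 ε)) (hw0 : w 0 = 0)
    (hderiv : ∀ y ∈ Ioo 0 ε \ E, HasDerivAt w (q y) y)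
    (hq : IntegrableOn (fun y => y ^ (-a) * q y) (Ioc 0 ε)) :
    ‖w ε * ε ^ (-a)‖ ≤ ∫ y in Ioc 0 ε, ‖y ^ (-a) * q y‖ := by
  have hq' : IntervalIntegrable q volume 0 ε :=
    (intervalIntegrable_iff_integrableOn_Ioc_of_le hε.le).2 (integrableOn_Ioc_of_rpow_neg_mul ha hq)
  have hw : w ε = ∫ y in Ioc 0 ε, q y := by
    rw [← intervalIntegral.integral_of_le hε.le,
      integral_eq_of_hasDerivAt_off_countable_of_le w q hε.le hE hcont hderiv hq', hw0, sub_zero]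
  rw [hw, mul_comm, ← integral_const_mul]
  refine norm_integral_le_of_norm_le hq.norm ?_
  filter_upwards [ae_restrict_mem measurableSet_Ioc] with y hy
  exact norm_rpow_mul_le_norm_rpow_neg_mul ha hy (q y)

lemma tendsto_mul_rpow_neg_nhdsGT_zero (ha : 0 ≤ a) (hE : E.Countable)
    (hcont : ContinuousOn w (Ici 0)) (hw0 : w 0 = 0)
    (hderiv : ∀ y ∈ Ioi 0 \ E, HasDerivAt w (q y) y)
    (hq : IntegrableOn (fun y => y ^ (-a) * q y) (Ioi 0)) :
    Tendsto (fun ε => w ε * ε ^ (-a)) (𝓝[>] 0) (𝓝 0) := by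
  have hlim : Tendsto (fun ε => ∫ y in Ioc 0 ε, ‖y ^ (-a) * q y‖) (𝓝[>] 0) (𝓝 0) := by
    have hprim := intervalIntegral.continuousOn_primitive (a := 0) (b := 1)
      ((integrableOn_Icc_iff_integrableOn_Ioc).2
        (IntegrableOn.mono_set hq.norm Ioc_subset_Ioi_self)) 0 (by simp)
    simpa using hprim.tendsto.mono_left (nhdsWithin_le_of_mem (Icc_mem_nhdsGT one_pos))
  refine squeeze_zero_norm' ?_ hlim
  filter_upwards [self_mem_nhdsWithin] with ε hε
  exact norm_mul_rpow_neg_le_setIntegral ha hε hE (hcont.mono Icc_subset_Ici_self) hw0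
    (fun y hy => hderiv y ⟨hy.1.1, hy.2⟩) (hq.mono_set Ioc_subset_Ioi_self)

lemma integrableOn_Ioi_mul_rpow_of_norm_le (ha : 0 < a) (hε : 0 < ε)
    (hcont : ContinuousOn w (Ioi ε)) (hC : ∀ y, ‖w y‖ ≤ C) :
    IntegrableOn (fun y => w y * y ^ (-1 - a)) (Ioi ε) :=
  (integrableOn_Ioi_rpow_of_lt (by linarith) hε).bdd_mul
    (hcont.aestronglyMeasurable measurableSet_Ioi) (ae_of_all _ hC)

lemma integral_Ioi_mul_rpow_eq_div (ha : 0 < a) (hε : 0 < ε) (hE : E.Countable)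
    (hcont : ContinuousOn w (Ici ε)) (hC : ∀ y, ‖w y‖ ≤ C)
    (hderiv : ∀ y ∈ Ioi ε \ E, HasDerivAt w (q y) y)
    (hq : IntegrableOn (fun y => y ^ (-a) * q y) (Ioi ε)) :
    ∫ y in Ioi ε, w y * y ^ (-1 - a) =
      (w ε * ε ^ (-a) + ∫ y in Ioi ε, y ^ (-a) * q y) / a := by
  have hw := integrableOn_Ioi_mul_rpow_of_norm_le ha hε (hcont.mono Ioi_subset_Ici_self) hC
  have hprod : ∀ y ∈ Ioi ε \ E,
      HasDerivAt (fun y => w y * y ^ (-a)) (y ^ (-a) * q y - a * (w y * y ^ (-1 - a))) y := by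
    intro y hy
    have hy0 : y ≠ 0 := (hε.trans hy.1).ne'
    refine ((hderiv y hy).mul (Real.hasDerivAt_rpow_const (Or.inl hy0))).congr_deriv ?_
    rw [neg_sub_left, ← neg_add', add_comm]
    ring
  have hlim : Tendsto (fun y => w y * y ^ (-a)) atTop (𝓝 0) :=
    isBoundedUnder_le_mul_tendsto_zero (isBoundedUnder_of ⟨C, hC⟩) (tendsto_rpow_neg_atTop ha)
  have hftc := integral_Ioi_of_hasDerivAt_off_countable_of_tendsto hE
    (hcont.mul (continuousOn_id.rpow_const fun y hy => Or.inl (hε.trans_le hy).ne')) hprod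
    (hq.sub (hw.const_mul a)) hlim
  rw [integral_sub hq (hw.const_mul a), integral_const_mul, Pi.mul_apply, id] at hftc
  rw [eq_div_iff ha.ne']
  linarith

lemma tendsto_integral_Ioi_mul_rpow (ha : 0 < a) (hE : E.Countable)
    (hcont : ContinuousOn w (Ici 0)) (hw0 : w 0 = 0) (hC : ∀ y, ‖w y‖ ≤ C)
    (hderiv : ∀ y ∈ Ioi 0 \ E, HasDerivAt w (q y) y)
    (hq : IntegrableOn (fun y => y ^ (-a) * q y) (Ioi 0)) :
    Tendsto (fun ε => ∫ y in Ioi ε, w y * y ^ (-1 - a)) (𝓝[>] 0)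
      (𝓝 ((∫ y in Ioi 0, y ^ (-a) * q y) / a)) := by
  have hcov : AECover (volume.restrict (Ioi (0 : ℝ))) (𝓝[>] 0) Ioi :=
    aecover_Ioi_of_Ioi (tendsto_id.mono_left nhdsWithin_le_nhds)
  have hlim := ((tendsto_mul_rpow_neg_nhdsGT_zero ha.le hE hcont hw0 hderiv hq).add
    (hcov.integral_tendsto_of_countably_generated hq)).div_const a
  rw [zero_add] at hlim
  refine hlim.congr' ?_
  filter_upwards [self_mem_nhdsWithin] with ε hε
  have hsub : Ioi ε ⊆ Ioi 0 := Ioi_subset_Ioi (le_of_lt hε)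
  rw [Measure.restrict_restrict measurableSet_Ioi, inter_eq_left.2 hsub]
  exact (integral_Ioi_mul_rpow_eq_div ha hε hE (hcont.mono (Ici_subset_Ici.2 (le_of_lt hε))) hC
    (fun y hy => hderiv y ⟨hsub hy.1, hy.2⟩) (hq.mono_set hsub)).symm

end SingularFTC

section Folding

variable {F : Type*} [NormedAddCommGroup F] [NormedSpace ℝ F] {f : ℝ → F} {ε p : ℝ}

lemma integral_eq_integral_Ioi_add_comp_neg (hf : Integrable f) :
    ∫ y, f y = ∫ y in Ioi 0, (f y + f (-y)) := by
  rw [integral_add hf.integrableOn hf.comp_neg.integrableOn, integral_comp_neg_Ioi, neg_zero,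
    add_comm, intervalIntegral.integral_Iic_add_Ioi hf.integrableOn hf.integrableOn]

lemma integrableOn_Ioi_mul_comp_sub_add {k v : ℝ → ℝ} {x : ℝ}
    (h : Integrable fun y => k (x - y) * v y) :
    IntegrableOn (fun y => k y * v (x - y) + k (-y) * v (x + y)) (Ioi 0) := by
  have h' : Integrable fun z => k z * v (x - z) := by simpa using h.comp_sub_left x
  simpa only [sub_neg_eq_add] using (h'.fun_add h'.comp_neg).integrableOn

lemma integral_comp_sub_mul_eq_integral_Ioi {k v : ℝ → ℝ} {x : ℝ}
    (h : Integrable fun y => k (x - y) * v y) :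
    ∫ y, k (x - y) * v y = ∫ y in Ioi 0, (k y * v (x - y) + k (-y) * v (x + y)) := by
  have h' : Integrable fun z => k z * v (x - z) := by simpa using h.comp_sub_left x
  have hfold := integral_eq_integral_Ioi_add_comp_neg h'
  simp only [sub_neg_eq_add] at hfold
  rw [← hfold, ← integral_sub_left_eq_self _ volume x]
  simp only [sub_sub_cancel]

lemma measurableSet_le_abs (ε : ℝ) : MeasurableSet {y : ℝ | ε ≤ |y|} :=
  measurableSet_le measurable_const measurable_id.abs

lemma setIntegral_le_abs_eq_integral_Ioi (hε : 0 < ε) (hf : IntegrableOn f {y | ε ≤ |y|}) :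
    ∫ y in {y | ε ≤ |y|}, f y = ∫ y in Ioi ε, (f y + f (-y)) := by
  have hfold : ∀ y ∈ Ioi (0 : ℝ), {y | ε ≤ |y|}.indicator f y + {y | ε ≤ |y|}.indicator f (-y) =
      (Ici ε).indicator (fun y => f y + f (-y)) y := fun y hy => by
    simp only [indicator_apply, mem_ofPred_eq, abs_neg, abs_of_pos (mem_Ioi.1 hy), mem_Ici]
    split_ifs <;> simp
  rw [← integral_indicator (measurableSet_le_abs ε), integral_eq_integral_Ioi_add_comp_neg
    (hf.integrable_indicator (measurableSet_le_abs ε)), setIntegral_congr_fun measurableSet_Ioi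
    hfold, setIntegral_indicator measurableSet_Ici, inter_eq_right.2 (Ici_subset_Ioi.2 hε),
    integral_Ici_eq_integral_Ioi]

lemma integrableOn_abs_rpow_le_abs (hp : p < -1) (hε : 0 < ε) :
    IntegrableOn (fun y : ℝ => |y| ^ p) {y | ε ≤ |y|} := by
  rw [← integrable_indicator_iff (measurableSet_le_abs ε)]
  refine (integrable_fun_norm_addHaar volume (f := (Ici ε).indicator fun y : ℝ => y ^ p)).2 ?_
  simp only [Module.finrank_self, tsub_self, pow_zero, one_smul]
  exact ((integrable_indicator_iff measurableSet_Ici).2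
    ((integrableOn_Ici_iff_integrableOn_Ioi).2 (integrableOn_Ioi_rpow_of_lt hp hε))).integrableOn

end Folding

section PVConv

variable {k g v v₁ v₂ : ℝ → ℝ} {x : ℝ}

/-- Existence of the principal value `p.v. ∫ k z * v (x - z) dz` for an odd kernel `k`, in the
sense that the integral obtained by folding `z` and `-z` together converges absolutely. Only the
values of `k` on the positive half-line enter. -/
def PVConvExistsAt (k v : ℝ → ℝ) (x : ℝ) : Prop :=
  IntegrableOn (fun y => k y * (v (x - y) - v (x + y))) (Ioi 0)

/-- The principal value `p.v. ∫ k z * v (x - z) dz` of an odd kernel `k` against `v`, as a folded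
integral over the positive half-line. -/
noncomputable def pvConv (k v : ℝ → ℝ) (x : ℝ) : ℝ :=
  ∫ y in Ioi 0, k y * (v (x - y) - v (x + y))

lemma mul_add_sub_add_eq (k v₁ v₂ : ℝ → ℝ) (x y : ℝ) :
    k y * ((v₁ + v₂) (x - y) - (v₁ + v₂) (x + y)) =
      k y * (v₁ (x - y) - v₁ (x + y)) + k y * (v₂ (x - y) - v₂ (x + y)) := by
  simp only [Pi.add_apply]
  ring

lemma PVConvExistsAt.add (h₁ : PVConvExistsAt k v₁ x) (h₂ : PVConvExistsAt k v₂ x) :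
    PVConvExistsAt k (v₁ + v₂) x :=
  (Integrable.add h₁ h₂).congr (ae_of_all _ fun y => (mul_add_sub_add_eq k v₁ v₂ x y).symm)

lemma pvConv_add (h₁ : PVConvExistsAt k v₁ x) (h₂ : PVConvExistsAt k v₂ x) :
    pvConv k (v₁ + v₂) x = pvConv k v₁ x + pvConv k v₂ x := by
  simpa only [pvConv, mul_add_sub_add_eq] using integral_add h₁ h₂

lemma norm_sub_sub_add_le_of_lipschitzWith {C : ℝ≥0} (hg : LipschitzWith C g) (x y : ℝ) :
    ‖g (x - y) - g (x + y)‖ ≤ 2 * C * ‖y‖ := by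
  have hlip := hg.dist_le_mul (x - y) (x + y)
  rw [dist_eq_norm, dist_eq_norm, show x - y - (x + y) = -(2 * y) by ring, norm_neg, norm_mul,
    Real.norm_two] at hlip
  linarith

lemma hasCompactSupport_sub_sub_add (hg : HasCompactSupport g) (x : ℝ) :
    HasCompactSupport fun y => g (x - y) - g (x + y) :=
  (hg.comp_homeomorph (Homeomorph.subLeft x)).sub (hg.comp_homeomorph (Homeomorph.addLeft x))

lemma pvConvExistsAt_of_hasCompactSupport (hk : LocallyIntegrable fun z => k z * z)
    (hg : ContDiff ℝ 1 g) (hcg : HasCompactSupport g) (x : ℝ) : PVConvExistsAt k g x := by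
  obtain ⟨C, hC⟩ := hg.lipschitzWith_of_hasCompactSupport hcg one_ne_zero
  set d : ℝ → ℝ := fun y => g (x - y) - g (x + y) with hd
  have hquot : ∀ y, ‖d y / y‖ ≤ 2 * C := fun y => by
    rw [norm_div]
    exact div_le_of_le_mul₀ (norm_nonneg _) (by positivity)
      (norm_sub_sub_add_le_of_lipschitzWith hC x y)
  have hint : IntegrableOn (fun y => k y * y * (d y / y)) (tsupport d) :=
    (hk.integrableOn_isCompact (hasCompactSupport_sub_sub_add hcg x)).mul_bdd
      (Measurable.aestronglyMeasurable (by have := hg.continuous.measurable; fun_prop))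
      (ae_of_all _ hquot)
  have heq : (fun y => k y * y * (d y / y)) = fun y => k y * d y := by
    funext y
    rcases eq_or_ne y 0 with rfl | hy
    · simp [hd]
    · field_simp
  rw [heq, integrableOn_iff_integrable_of_support_subset
    ((Function.support_mul_subset_right _ _).trans (subset_tsupport d))] at hint
  exact hint.integrableOn

lemma pvConvExistsAt_of_integrable (hk : k.Odd) (h : Integrable fun y => k (x - y) * v y) :
    PVConvExistsAt k v x :=
  (integrableOn_Ioi_mul_comp_sub_add h).congr_fun (fun y _ => by simp only [hk y]; ring)
    measurableSet_Ioi

lemma pvConv_eq_integral (hk : k.Odd) (h : Integrable fun y => k (x - y) * v y) :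
    pvConv k v x = ∫ y, k (x - y) * v y := by
  rw [integral_comp_sub_mul_eq_integral_Ioi h]
  exact integral_congr_ae (ae_of_all _ fun y => by simp only [hk y]; ring)

end PVConv

section FracLap

variable {u v : ℝ → ℝ} {s x y ε B : ℝ} {E : Set ℝ}

/-- The symmetric second difference `2 u(x) - u(x - y) - u(x + y)`: folding `y` and `-y` together
turns the integrand of the fractional Laplacian into `secondDiff u x y * y ^ (-1 - 2 * s)`. -/
def secondDiff (u : ℝ → ℝ) (x y : ℝ) : ℝ := 2 * u x - u (x - y) - u (x + y)

lemma continuous_secondDiff (hu : Continuous u) (x : ℝ) : Continuous (secondDiff u x) := by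
  unfold secondDiff
  fun_prop

lemma secondDiff_zero (u : ℝ → ℝ) (x : ℝ) : secondDiff u x 0 = 0 := by
  rw [secondDiff, sub_zero, add_zero]
  ring

lemma norm_secondDiff_le (hB : ∀ y, ‖u y‖ ≤ B) (x y : ℝ) : ‖secondDiff u x y‖ ≤ 4 * B := by
  have h₁ := norm_sub_le (2 * u x - u (x - y)) (u (x + y))
  have h₂ := norm_sub_le (2 * u x) (u (x - y))
  rw [norm_mul, Real.norm_two] at h₂
  unfold secondDiff
  linarith [hB x, hB (x - y), hB (x + y)]

lemma hasDerivAt_secondDiff (hsub : HasDerivAt u (v (x - y)) (x - y))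
    (hadd : HasDerivAt u (v (x + y)) (x + y)) :
    HasDerivAt (secondDiff u x) (v (x - y) - v (x + y)) y :=
  (((hsub.comp_const_sub x y).const_sub (2 * u x)).sub
    (hadd.comp_const_add x y)).congr_deriv (by rw [neg_neg])

lemma setIntegral_le_abs_eq_integral_secondDiff (hs : 0 < s) (hε : 0 < ε) (hu : Continuous u)
    (hB : ∀ y, ‖u y‖ ≤ B) (x : ℝ) :
    ∫ y in {y | ε ≤ |y|}, (u x - u (x - y)) * |y| ^ (-1 - 2 * s) =
      ∫ y in Ioi ε, secondDiff u x y * y ^ (-1 - 2 * s) := by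
  have hint : IntegrableOn (fun y => (u x - u (x - y)) * |y| ^ (-1 - 2 * s)) {y | ε ≤ |y|} :=
    (integrableOn_abs_rpow_le_abs (by linarith) hε).bdd_mul (c := B + B)
      (Continuous.aestronglyMeasurable (by fun_prop))
      (ae_of_all _ fun y => (norm_sub_le _ _).trans (add_le_add (hB _) (hB _)))
  rw [setIntegral_le_abs_eq_integral_Ioi hε hint]
  refine setIntegral_congr_fun measurableSet_Ioi fun y hy => ?_
  simp only [secondDiff, abs_neg, sub_neg_eq_add, abs_of_pos (hε.trans hy)]
  ring

theorem hasFracLap_of_pvConvExistsAt (hs : 0 < s) (hu : Continuous u) (hB : ∀ y, ‖u y‖ ≤ B)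
    (hE : E.Countable) (hderiv : ∀ t ∉ E, HasDerivAt u (v t) t)
    (hv : PVConvExistsAt (fun y => y ^ (-(2 * s))) v x) :
    HasFracLap s u x (C1 s * (pvConv (fun y => y ^ (-(2 * s))) v x / (2 * s))) := by
  have hE' : ((x - ·) ⁻¹' E ∪ (x + ·) ⁻¹' E).Countable :=
    (hE.preimage sub_right_injective).union (hE.preimage (add_right_injective x))
  have hlim := tendsto_integral_Ioi_mul_rpow (by positivity) hE'
    (continuous_secondDiff hu x).continuousOn (secondDiff_zero u x) (norm_secondDiff_le hB x)
    (fun y hy => hasDerivAt_secondDiff (hderiv _ (not_or.1 hy.2).1) (hderiv _ (not_or.1 hy.2).2)) hv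
  refine (hlim.congr' ?_).const_mul (C1 s)
  filter_upwards [self_mem_nhdsWithin] with ε hε
  exact (setIntegral_le_abs_eq_integral_secondDiff hs hε hu hB x).symm

end FracLap

/-- An even kernel, `C¹` away from the origin, whose singularity there is weak enough to integrate
by parts: `K` and `z * K' z` are locally integrable, and `y * K y → 0`. At a point where `v` is
`C¹`, the derivative of the convolution `K * v` is then a principal value of `K'` against `v`. -/
structure IsSingularKernel (K : ℝ → ℝ) : Prop where
  even : K.Even
  locallyIntegrable : LocallyIntegrable K
  contDiffOn : ContDiffOn ℝ 1 K {0}ᶜ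
  locallyIntegrable_deriv_mul : LocallyIntegrable fun z => deriv K z * z
  tendsto_mul_self : Tendsto (fun y => K y * y) (𝓝[>] 0) (𝓝 0)

namespace IsSingularKernel

variable {K : ℝ → ℝ} {z : ℝ}

lemma hasDerivAt (hK : IsSingularKernel K) (hz : z ≠ 0) : HasDerivAt K (deriv K z) z :=
  ((hK.contDiffOn.contDiffAt (isOpen_compl_singleton.mem_nhds hz)).differentiableAt
    one_ne_zero).hasDerivAt

lemma continuousOn_deriv (hK : IsSingularKernel K) : ContinuousOn (deriv K) {0}ᶜ :=
  hK.contDiffOn.continuousOn_deriv_of_isOpen isOpen_compl_singleton le_rfl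

lemma odd_deriv (hK : IsSingularKernel K) : (deriv K).Odd := fun z => by
  have hcomp : (fun y => K (-y)) = K := funext hK.even
  have hd := deriv_comp_neg K z
  rw [hcomp] at hd
  rw [hd, neg_neg]

end IsSingularKernel

section Kernels

variable {r y : ℝ}

lemma deriv_abs_rpow_mul_self {z : ℝ} (hz : z ≠ 0) (r : ℝ) :
    deriv (fun z => |z| ^ r) z * z = r * |z| ^ r := by
  rw [((hasDerivAt_abs hz).rpow_const (Or.inl (abs_ne_zero.2 hz))).deriv]
  have hsign : (SignType.sign z : ℝ) * z = |z| := sign_mul_self z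
  have hpow : |z| ^ r = |z| ^ (r - 1) * |z| := by
    rw [← Real.rpow_add_one (abs_ne_zero.2 hz), sub_add_cancel]
  rw [hpow, ← hsign]
  ring

lemma deriv_abs_rpow_of_pos (hy : 0 < y) (r : ℝ) :
    deriv (fun z => |z| ^ r) y = r * y ^ (r - 1) := by
  rw [((hasDerivAt_abs_pos hy).rpow_const (Or.inl (abs_ne_zero.2 hy.ne'))).deriv, one_mul,
    abs_of_pos hy]

lemma locallyIntegrable_abs_rpow (hr : -1 < r) : LocallyIntegrable fun z : ℝ => |z| ^ r := by
  refine locallyIntegrable_of_norm_le_rpow (C := 1) (α := -r) (by simp)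
    (by simpa using by linarith) (ae_of_all _ fun z => ?_)
    (Measurable.aestronglyMeasurable (by fun_prop))
  rw [neg_neg, one_mul, Real.norm_eq_abs z, Real.norm_of_nonneg (by positivity)]

lemma isSingularKernel_abs_rpow (hr : -1 < r) : IsSingularKernel fun z => |z| ^ r where
  even z := by simp only [abs_neg]
  locallyIntegrable := locallyIntegrable_abs_rpow hr
  contDiffOn z hz :=
    ((contDiffAt_abs hz).rpow_const_of_ne (abs_ne_zero.2 hz)).contDiffWithinAt
  locallyIntegrable_deriv_mul := ((locallyIntegrable_abs_rpow hr).smul r).congr <| by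
    filter_upwards [Measure.ae_ne volume 0] with z hz
    exact (deriv_abs_rpow_mul_self hz r).symm
  tendsto_mul_self := by
    have hlim : Tendsto (fun y : ℝ => y ^ (r + 1)) (𝓝[>] 0) (𝓝 0) :=
      tendsto_nhdsWithin_of_tendsto_nhds
        ((Real.continuous_rpow_const (by linarith)).tendsto' _ _ (Real.zero_rpow (by linarith)))
    refine hlim.congr' ?_
    filter_upwards [self_mem_nhdsWithin] with y hy
    rw [abs_of_pos hy, Real.rpow_add_one hy.ne']

lemma locallyIntegrable_log : LocallyIntegrable Real.log := fun x =>
  ⟨Icc (x - 1) (x + 1), Icc_mem_nhds (by linarith) (by linarith),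
    (intervalIntegrable_iff_integrableOn_Icc_of_le (by linarith)).1
      intervalIntegral.intervalIntegrable_log'⟩

lemma isSingularKernel_log : IsSingularKernel Real.log where
  even := Real.log_neg_eq_log
  locallyIntegrable := locallyIntegrable_log
  contDiffOn := Real.contDiffOn_log.of_le le_top
  locallyIntegrable_deriv_mul := (locallyIntegrable_const 1).congr <| by
    filter_upwards [Measure.ae_ne volume 0] with z hz
    rw [Real.deriv_log, inv_mul_cancel₀ hz]
  tendsto_mul_self := by simpa only [Real.rpow_one] using tendsto_log_mul_rpow_nhdsGT_zero one_pos

end Kernels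

namespace IsSingularKernel

variable {K g h v : ℝ → ℝ} {x : ℝ}

lemma integrable_comp_sub_mul_of_hasCompactSupport (hK : IsSingularKernel K) (hg : Continuous g)
    (hcg : HasCompactSupport g) (t : ℝ) : Integrable fun y => K (t - y) * g y := by
  simpa only [ConvolutionExistsAt, ContinuousLinearMap.mul_apply', mul_comm (g _)] using
    hcg.convolutionExists_left (ContinuousLinearMap.mul ℝ ℝ) hg hK.locallyIntegrable t

lemma tendsto_mul_sub_sub_add (hK : IsSingularKernel K) {C : ℝ≥0} (hg : LipschitzWith C g)
    (x : ℝ) : Tendsto (fun y => K y * (g (x - y) - g (x + y))) (𝓝[>] 0) (𝓝 0) := by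
  have hlim : Tendsto (fun y => 2 * C * ‖K y * y‖) (𝓝[>] 0) (𝓝 0) := by
    simpa using hK.tendsto_mul_self.norm.const_mul (2 * (C : ℝ))
  refine squeeze_zero_norm (fun y => ?_) hlim
  have hle := norm_sub_sub_add_le_of_lipschitzWith hg x y
  calc ‖K y * (g (x - y) - g (x + y))‖ ≤ ‖K y‖ * (2 * C * ‖y‖) := by rw [norm_mul]; gcongr
    _ = 2 * C * ‖K y * y‖ := by rw [norm_mul]; ring

lemma integral_mul_deriv_eq_pvConv (hK : IsSingularKernel K) (hg : ContDiff ℝ 1 g)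
    (hcg : HasCompactSupport g) (x : ℝ) :
    ∫ y, K (x - y) * deriv g y = pvConv (deriv K) g x := by
  obtain ⟨C, hC⟩ := hg.lipschitzWith_of_hasCompactSupport hcg one_ne_zero
  have hint := hK.integrable_comp_sub_mul_of_hasCompactSupport (hg.continuous_deriv le_rfl)
    hcg.deriv x
  have hfold : ∀ y, K y * deriv g (x - y) + K (-y) * deriv g (x + y) =
      K y * (deriv g (x - y) + deriv g (x + y)) := fun y => by
    rw [hK.even]
    ring
  have hderiv : ∀ y, HasDerivAt (fun y => g (x - y) - g (x + y))
      (-(deriv g (x - y) + deriv g (x + y))) y := fun y => by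
    have hg' := fun t => (hg.differentiable one_ne_zero t).hasDerivAt
    rw [neg_add']
    exact ((hg' (x - y)).comp_const_sub x y).sub ((hg' (x + y)).comp_const_add x y)
  have hint' : IntegrableOn (fun y => K y * -(deriv g (x - y) + deriv g (x + y))) (Ioi 0) := by
    simpa only [hfold, mul_neg] using (integrableOn_Ioi_mul_comp_sub_add hint).fun_neg
  have hparts := integral_Ioi_mul_deriv_eq_deriv_mul (fun y hy => hK.hasDerivAt (ne_of_gt hy))
    (fun y _ => hderiv y) hint'
    (pvConvExistsAt_of_hasCompactSupport hK.locallyIntegrable_deriv_mul hg hcg x)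
    (hK.tendsto_mul_sub_sub_add hC x)
    ((hasCompactSupport_sub_sub_add hcg x).mul_left.is_zero_at_infty.mono_left atTop_le_cocompact)
  simp only [mul_neg, integral_neg, sub_zero, zero_sub, neg_inj] at hparts
  rw [integral_comp_sub_mul_eq_integral_Ioi hint]
  simpa only [hfold, pvConv] using hparts

lemma hasDerivAt_integral_of_contDiff (hK : IsSingularKernel K) (hg : ContDiff ℝ 1 g)
    (hcg : HasCompactSupport g) (x : ℝ) :
    HasDerivAt (fun t => ∫ y, K (t - y) * g y) (pvConv (deriv K) g x) x := by
  rw [← hK.integral_mul_deriv_eq_pvConv hg hcg]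
  simp only [mul_comm (K _)]
  exact hcg.hasDerivAt_convolution_left (ContinuousLinearMap.mul ℝ ℝ) hg hK.locallyIntegrable x

end IsSingularKernel

section FarPart

variable {φ h K : ℝ → ℝ} {x : ℝ}

lemma eventually_norm_comp_sub_mul_le (hφ : ContinuousOn φ {0}ᶜ) (hch : HasCompactSupport h)
    (hx : x ∉ tsupport h) : ∃ C, ∀ᶠ t in 𝓝 x, ∀ y, ‖φ (t - y) * h y‖ ≤ C * ‖h y‖ := by
  obtain ⟨U, hU, hxU, hUh⟩ :=
    exists_compact_subset (isClosed_tsupport h).isOpen_compl (mem_compl hx)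
  obtain ⟨C, hC⟩ : ∃ C, ∀ p ∈ U ×ˢ tsupport h, ‖φ (p.1 - p.2)‖ ≤ C :=
    (hU.prod hch.isCompact).exists_bound_of_continuousOn <|
      hφ.comp (by fun_prop) fun p hp hp0 => hUh hp.1 (sub_eq_zero.1 hp0 ▸ hp.2)
  refine ⟨C, ?_⟩
  filter_upwards [mem_interior_iff_mem_nhds.1 hxU] with t ht y
  by_cases hy : h y = 0
  · simp [hy]
  · rw [norm_mul]
    exact mul_le_mul_of_nonneg_right (hC (t, y) ⟨ht, subset_tsupport h hy⟩) (norm_nonneg _)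

lemma aestronglyMeasurable_comp_sub_mul (hφ : ContinuousOn φ {0}ᶜ) (hh : AEStronglyMeasurable h)
    (t : ℝ) : AEStronglyMeasurable fun y => φ (t - y) * h y :=
  ((measurable_of_continuousOn_compl_singleton 0 hφ).comp
    (measurable_const_sub t)).aestronglyMeasurable.mul hh

lemma eventually_integrable_comp_sub_mul (hφ : ContinuousOn φ {0}ᶜ) (hh : Integrable h)
    (hch : HasCompactSupport h) (hx : x ∉ tsupport h) :
    ∀ᶠ t in 𝓝 x, Integrable fun y => φ (t - y) * h y := by
  obtain ⟨C, hC⟩ := eventually_norm_comp_sub_mul_le hφ hch hx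
  filter_upwards [hC] with t ht
  exact (hh.norm.const_mul C).mono' (aestronglyMeasurable_comp_sub_mul hφ hh.1 t) (ae_of_all _ ht)

lemma hasDerivAt_integral_of_notMem_tsupport (hK : ContDiffOn ℝ 1 K {0}ᶜ) (hh : Integrable h)
    (hch : HasCompactSupport h) (hx : x ∉ tsupport h) :
    HasDerivAt (fun t => ∫ y, K (t - y) * h y) (∫ y, deriv K (x - y) * h y) x := by
  have hK' : ContinuousOn (deriv K) {0}ᶜ :=
    hK.continuousOn_deriv_of_isOpen isOpen_compl_singleton le_rfl
  obtain ⟨C, hC⟩ := eventually_norm_comp_sub_mul_le hK' hch hx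
  have hderiv : ∀ t ∉ tsupport h, ∀ y,
      HasDerivAt (fun t => K (t - y) * h y) (deriv K (t - y) * h y) t := fun t ht y => by
    by_cases hy : h y = 0
    · simpa [hy] using hasDerivAt_const t (0 : ℝ)
    · have hty : t - y ≠ 0 := fun h0 => ht (sub_eq_zero.1 h0 ▸ subset_tsupport h hy)
      exact (((hK.contDiffAt (isOpen_compl_singleton.mem_nhds hty)).differentiableAt
        one_ne_zero).hasDerivAt.comp_sub_const t y).mul_const (h y)
  have hint := eventually_integrable_comp_sub_mul hK.continuousOn hh hch hx
  exact (hasDerivAt_integral_of_dominated_loc_of_deriv_le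
    (hC.and ((isClosed_tsupport h).isOpen_compl.mem_nhds hx))
    (hint.mono fun t ht => ht.1) hint.self_of_nhds (aestronglyMeasurable_comp_sub_mul hK' hh.1 x)
    (ae_of_all _ fun y t ht => ht.1 y) (hh.norm.const_mul C)
    (ae_of_all _ fun y t ht => hderiv t ht.2 y)).2

end FarPart

lemma exists_contDiff_add_of_contDiffAt {v : ℝ → ℝ} {x : ℝ} (hv : Integrable v)
    (hcv : HasCompactSupport v) (hvx : ContDiffAt ℝ 1 v x) :
    ∃ g h : ℝ → ℝ, ContDiff ℝ 1 g ∧ HasCompactSupport g ∧ Integrable h ∧ HasCompactSupport h ∧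
      x ∉ tsupport h ∧ v = g + h := by
  obtain ⟨r, hr, hball⟩ := Metric.eventually_nhds_iff_ball.1 (hvx.eventually (by simp))
  let f : ContDiffBump x := ⟨r / 4, r / 2, by linarith, by linarith⟩
  set g : ℝ → ℝ := fun y => f y * v y with hgdef
  have hcg : HasCompactSupport g := f.hasCompactSupport.mul_right
  have hg : ContDiff ℝ 1 g := contDiff_iff_contDiffAt.2 fun y => by
    by_cases hy : y ∈ tsupport g
    · have hyf : y ∈ tsupport f := tsupport_mul_subset_left hy
      rw [f.tsupport_eq] at hyf
      exact f.contDiff.contDiffAt.mul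
        (hball y (Metric.closedBall_subset_ball (half_lt_self hr) hyf))
    · exact contDiffAt_const.congr_of_eventuallyEq (notMem_tsupport_iff_eventuallyEq.1 hy)
  refine ⟨g, v - g, hg, hcg, hv.sub (hg.continuous.integrable_of_hasCompactSupport hcg),
    hcv.sub hcg, notMem_tsupport_iff_eventuallyEq.2 ?_, (add_sub_cancel _ _).symm⟩
  filter_upwards [f.eventuallyEq_one] with y hy
  simp [hgdef, hy]

namespace IsSingularKernel

variable {K v : ℝ → ℝ} {x : ℝ}

theorem pvConvExistsAt_deriv (hK : IsSingularKernel K) (hv : Integrable v)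
    (hcv : HasCompactSupport v) (hvx : ContDiffAt ℝ 1 v x) : PVConvExistsAt (deriv K) v x := by
  obtain ⟨g, h, hg, hcg, hh, hch, hxh, rfl⟩ := exists_contDiff_add_of_contDiffAt hv hcv hvx
  exact (pvConvExistsAt_of_hasCompactSupport hK.locallyIntegrable_deriv_mul hg hcg x).add
    (pvConvExistsAt_of_integrable hK.odd_deriv
      (eventually_integrable_comp_sub_mul hK.continuousOn_deriv hh hch hxh).self_of_nhds)

theorem eventually_integrable (hK : IsSingularKernel K) (hv : Integrable v)
    (hcv : HasCompactSupport v) (hvx : ContDiffAt ℝ 1 v x) :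
    ∀ᶠ t in 𝓝 x, Integrable fun y => K (t - y) * v y := by
  obtain ⟨g, h, hg, hcg, hh, hch, hxh, rfl⟩ := exists_contDiff_add_of_contDiffAt hv hcv hvx
  filter_upwards [eventually_integrable_comp_sub_mul hK.contDiffOn.continuousOn hh hch hxh]
    with t ht
  simpa only [Pi.add_apply, mul_add] using
    (hK.integrable_comp_sub_mul_of_hasCompactSupport hg.continuous hcg t).fun_add ht

theorem hasDerivAt_integral (hK : IsSingularKernel K) (hv : Integrable v)
    (hcv : HasCompactSupport v) (hvx : ContDiffAt ℝ 1 v x) :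
    HasDerivAt (fun t => ∫ y, K (t - y) * v y) (pvConv (deriv K) v x) x := by
  obtain ⟨g, h, hg, hcg, hh, hch, hxh, rfl⟩ := exists_contDiff_add_of_contDiffAt hv hcv hvx
  have hint' := (eventually_integrable_comp_sub_mul hK.continuousOn_deriv hh hch hxh).self_of_nhds
  rw [pvConv_add (pvConvExistsAt_of_hasCompactSupport hK.locallyIntegrable_deriv_mul hg hcg x)
    (pvConvExistsAt_of_integrable hK.odd_deriv hint'), pvConv_eq_integral hK.odd_deriv hint']
  refine ((hK.hasDerivAt_integral_of_contDiff hg hcg x).add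
    (hasDerivAt_integral_of_notMem_tsupport hK.contDiffOn hh hch hxh)).congr_of_eventuallyEq ?_
  filter_upwards [eventually_integrable_comp_sub_mul hK.contDiffOn.continuousOn hh hch hxh]
    with t ht
  simp only [Pi.add_apply, mul_add]
  exact integral_add (hK.integrable_comp_sub_mul_of_hasCompactSupport hg.continuous hcg t) ht

end IsSingularKernel

section Domain

variable {u : ℝ → ℝ} {Ω : Set ℝ} {t : ℝ}

lemma frontier_iUnion_subset_of_finite {ι X : Type*} [Finite ι] [TopologicalSpace X]
    (U : ι → Set X) : frontier (⋃ i, U i) ⊆ ⋃ i, frontier (U i) := by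
  simp only [frontier, closure_iUnion_of_finite]
  rintro t ⟨ht, hint⟩
  obtain ⟨i, hi⟩ := mem_iUnion.1 ht
  exact mem_iUnion.2 ⟨i, hi, fun h => hint (interior_mono (subset_iUnion U i) h)⟩

lemma frontier_iUnion_Ioo_subset {ι : Type*} [Finite ι] {a b : ι → ℝ} (hab : ∀ i, a i < b i) :
    frontier (⋃ i, Ioo (a i) (b i)) ⊆ ⋃ i, {a i, b i} := by
  simpa only [frontier_Ioo (hab _)] using
    frontier_iUnion_subset_of_finite fun i => Ioo (a i) (b i)

lemma mem_or_eventuallyEq_zero (hΩ : IsOpen Ω) (hsupp : u.support ⊆ Ω) (ht : t ∉ frontier Ω) :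
    t ∈ Ω ∨ u =ᶠ[𝓝 t] 0 := by
  refine or_iff_not_imp_left.2 fun htΩ => notMem_tsupport_iff_eventuallyEq.1 fun htu => ht ?_
  rw [hΩ.frontier_eq]
  exact ⟨closure_mono hsupp htu, htΩ⟩

lemma ae_notMem_imp_deriv_eq_zero (hΩ : IsOpen Ω) (hsupp : u.support ⊆ Ω)
    (hfr : volume (frontier Ω) = 0) : ∀ᵐ t, t ∉ Ω → deriv u t = 0 := by
  filter_upwards [measure_eq_zero_iff_ae_notMem.1 hfr] with t ht htΩ
  have hut := (mem_or_eventuallyEq_zero hΩ hsupp ht).resolve_left htΩ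
  rw [hut.deriv_eq, deriv_zero, Pi.zero_apply]

lemma differentiableAt_of_notMem_frontier (hΩ : IsOpen Ω) (hsupp : u.support ⊆ Ω)
    (hd : DifferentiableOn ℝ u Ω) (ht : t ∉ frontier Ω) : DifferentiableAt ℝ u t :=
  (mem_or_eventuallyEq_zero hΩ hsupp ht).elim (fun htΩ => hd.differentiableAt (hΩ.mem_nhds htΩ))
    fun hut => (differentiableAt_const 0).congr_of_eventuallyEq hut

lemma contDiffAt_of_notMem_frontier {n : WithTop ℕ∞} (hΩ : IsOpen Ω) (hsupp : u.support ⊆ Ω)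
    (hu : t ∈ Ω → ContDiffAt ℝ n u t) (ht : t ∉ frontier Ω) : ContDiffAt ℝ n u t :=
  (mem_or_eventuallyEq_zero hΩ hsupp ht).elim hu fun hut =>
    contDiffAt_const.congr_of_eventuallyEq hut

end Domain

lemma sum_setIntegral_eq_integral {ι X F : Type*} [Fintype ι] [MeasurableSpace X]
    [NormedAddCommGroup F] [NormedSpace ℝ F] {μ : Measure X} {U : ι → Set X} {f : X → F}
    (hU : ∀ i, MeasurableSet (U i)) (hdisj : Pairwise (Disjoint on U))
    (hf : Integrable f μ) (hf0 : ∀ᵐ y ∂μ, y ∉ ⋃ i, U i → f y = 0) :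
    ∑ i, ∫ y in U i, f y ∂μ = ∫ y, f y ∂μ := by
  rw [← integral_iUnion_fintype hU hdisj fun i => hf.integrableOn,
    setIntegral_eq_integral_of_ae_compl_eq_zero hf0]

namespace IsSingularKernel

variable {K u : ℝ → ℝ} {s c x : ℝ}

theorem hasFracLap (hK : IsSingularKernel K) (hs : 0 < s) (hc : c ≠ 0)
    (hKc : ∀ y > 0, deriv K y = c * y ^ (-(2 * s))) (hu : Continuous u)
    (hcu : HasCompactSupport u) {E : Set ℝ} (hE : E.Countable)
    (hd : ∀ t ∉ E, DifferentiableAt ℝ u t) (hu' : Integrable (deriv u))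
    (hux : ContDiffAt ℝ 2 u x) :
    HasFracLap s u x (C1 s / (2 * s * c) * pvConv (deriv K) (deriv u) x) := by
  obtain ⟨B, hB⟩ := hcu.exists_bound_of_continuous hu
  have hkernel : ∀ y ∈ Ioi (0 : ℝ), deriv K y * (deriv u (x - y) - deriv u (x + y)) =
      c * (y ^ (-(2 * s)) * (deriv u (x - y) - deriv u (x + y))) := fun y hy => by
    rw [hKc y hy, mul_assoc]
  have hpv : pvConv (deriv K) (deriv u) x = c * pvConv (fun y => y ^ (-(2 * s))) (deriv u) x :=
    (setIntegral_congr_fun measurableSet_Ioi hkernel).trans (integral_const_mul _ _)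
  have hex : PVConvExistsAt (fun y => y ^ (-(2 * s))) (deriv u) x :=
    (integrable_const_mul_iff (Ne.isUnit hc) _).1 <|
      (hK.pvConvExistsAt_deriv hu' hcu.deriv (hux.derivWithin one_add_one_eq_two.le)).congr_fun
        hkernel measurableSet_Ioi
  convert hasFracLap_of_pvConvExistsAt hs hu hB hE (fun t ht => (hd t ht).hasDerivAt) hex using 1
  rw [hpv]
  field_simp

theorem exists_hasDerivAt_hasFracLap {ι : Type*} [Fintype ι] {U : ι → Set ℝ}
    (hK : IsSingularKernel K) (hs : 0 < s) (hc : c ≠ 0)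
    (hKc : ∀ y > 0, deriv K y = c * y ^ (-(2 * s))) (hU : ∀ i, IsOpen (U i))
    (hdisj : Pairwise (Disjoint on U)) (hbdd : Bornology.IsBounded (⋃ i, U i))
    (hfr : (frontier (⋃ i, U i)).Countable) (hu : Continuous u) (hsupp : u.support ⊆ ⋃ i, U i)
    (hd : DifferentiableOn ℝ u (⋃ i, U i)) (hu' : IntegrableOn (deriv u) (⋃ i, U i))
    (hx : x ∉ frontier (⋃ i, U i)) (hux : x ∈ ⋃ i, U i → ContDiffAt ℝ 2 u x) :
    ∃ F', HasDerivAt (fun t => ∑ i, ∫ y in U i, K (t - y) * deriv u y) F' x ∧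
      HasFracLap s u x (C1 s / (2 * s * c) * F') := by
  have hΩ : IsOpen (⋃ i, U i) := isOpen_iUnion hU
  have hzero := ae_notMem_imp_deriv_eq_zero hΩ hsupp (hfr.measure_zero volume)
  have hint : Integrable (deriv u) := hu'.integrable_of_ae_notMem_eq_zero hzero
  have hcu : HasCompactSupport u := .of_support_subset_isCompact hbdd.isCompact_closure
    (hsupp.trans subset_closure)
  replace hux : ContDiffAt ℝ 2 u x := contDiffAt_of_notMem_frontier hΩ hsupp hux hx
  have hux' : ContDiffAt ℝ 1 (deriv u) x := hux.derivWithin one_add_one_eq_two.le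
  refine ⟨_, (hK.hasDerivAt_integral hint hcu.deriv hux').congr_of_eventuallyEq ?_,
    hK.hasFracLap hs hc hKc hu hcu hfr
      (fun t => differentiableAt_of_notMem_frontier hΩ hsupp hd) hint hux⟩
  filter_upwards [hK.eventually_integrable hint hcu.deriv hux'] with t ht
  refine sum_setIntegral_eq_integral (fun i => (hU i).measurableSet) hdisj ht ?_
  filter_upwards [hzero] with y hy hyU
  rw [hy hyU, mul_zero]

end IsSingularKernel

lemma C1_half : C1 (1 / 2) = 1 / Real.pi := by
  rw [C1, add_halves, sub_half, Real.Gamma_one, Real.Gamma_one_half_eq,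
    Real.mul_self_sqrt Real.pi_pos.le]
  norm_num

theorem stmt2_general {s : ℝ} (hs : s ∈ Ioo (0 : ℝ) 1) {ι : Type*} [Fintype ι] {U : ι → Set ℝ}
    (hU : ∀ i, IsOpen (U i)) (hdisj : Pairwise (Disjoint on U))
    (hbdd : Bornology.IsBounded (⋃ i, U i)) (hfr : (frontier (⋃ i, U i)).Countable)
    {u : ℝ → ℝ} (hu : Continuous u) (hsupp : u.support ⊆ ⋃ i, U i)
    (hd : DifferentiableOn ℝ u (⋃ i, U i)) (hu' : IntegrableOn (deriv u) (⋃ i, U i))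
    {x : ℝ} (hx : x ∉ frontier (⋃ i, U i)) (hux : x ∈ ⋃ i, U i → ContDiffAt ℝ 2 u x) :
    (s ≠ 1 / 2 →
      ∃ F', HasDerivAt (fun t => ∑ i, ∫ y in U i, |t - y| ^ (1 - 2 * s) * deriv u y) F' x ∧
        HasFracLap s u x (Cs s * F')) ∧
    (s = 1 / 2 →
      ∃ G', HasDerivAt (fun t => ∑ i, ∫ y in U i, Real.log |t - y| * deriv u y) G' x ∧
        HasFracLap s u x (1 / Real.pi * G')) := by
  refine ⟨fun hs' => ?_, ?_⟩
  · have hc : 1 - 2 * s ≠ 0 := fun h => hs' (by linarith)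
    refine (isSingularKernel_abs_rpow (by linarith [hs.2])).exists_hasDerivAt_hasFracLap hs.1 hc
      (fun y hy => ?_) hU hdisj hbdd hfr hu hsupp hd hu' hx hux
    rw [deriv_abs_rpow_of_pos hy, sub_sub_cancel_left]
  · rintro rfl
    simp only [Real.log_abs]
    convert isSingularKernel_log.exists_hasDerivAt_hasFracLap hs.1 one_ne_zero (fun y _ => ?_)
      hU hdisj hbdd hfr hu hsupp hd hu' hx hux using 5
    · rw [C1_half]
      norm_num
    · rw [Real.deriv_log, one_mul, mul_one_div_cancel two_ne_zero, Real.rpow_neg_one]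

theorem stmt2 (s : ℝ) (hs : s ∈ Set.Ioo (0 : ℝ) 1)
    (M : ℕ) (hM : 1 ≤ M) (a b : Fin M → ℝ) (hab : ∀ i, a i < b i)
    (hdisj : ∀ i j, i ≠ j → Disjoint (Set.Icc (a i) (b i)) (Set.Icc (a j) (b j)))
    (u : ℝ → ℝ) (hu_cont : Continuous u)
    (hu_C2 : ContDiffOn ℝ 2 u (⋃ i, Set.Ioo (a i) (b i)))
    (hu_zero : ∀ y, y ∉ ⋃ i, Set.Ioo (a i) (b i) → u y = 0)
    (hu_int : MeasureTheory.IntegrableOn (deriv u) (⋃ i, Set.Ioo (a i) (b i)))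
    (x : ℝ) (hx : ∀ i, x ≠ a i ∧ x ≠ b i) :
    (s ≠ 1 / 2 →
      ∃ F' : ℝ,
        HasDerivAt
          (fun t : ℝ => ∑ i : Fin M, ∫ y in Set.Ioo (a i) (b i),
            |t - y| ^ (1 - 2 * s) * deriv u y) F' x ∧
        HasFracLap s u x (Cs s * F')) ∧
    (s = 1 / 2 →
      ∃ G' : ℝ,
        HasDerivAt
          (fun t : ℝ => ∑ i : Fin M, ∫ y in Set.Ioo (a i) (b i),
            Real.log |t - y| * deriv u y) G' x ∧
        HasFracLap s u x ((1 / Real.pi) * G')) := by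
  have hfr := frontier_iUnion_Ioo_subset hab
  have hcount : (frontier (⋃ i, Ioo (a i) (b i))).Countable :=
    (countable_iUnion fun i => (toFinite {a i, b i}).countable).mono hfr
  have hxfr : x ∉ frontier (⋃ i, Ioo (a i) (b i)) := fun h =>
    (mem_iUnion.1 (hfr h)).elim fun i hi => hi.elim (hx i).1 (hx i).2
  exact stmt2_general hs (fun i => isOpen_Ioo)
    (fun i j hij => (hdisj i j hij).mono Ioo_subset_Icc_self Ioo_subset_Icc_self)
    (Bornology.isBounded_iUnion.2 fun i => Metric.isBounded_Ioo (a i) (b i)) hcount hu_cont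
    (Function.support_subset_iff'.2 hu_zero) (hu_C2.differentiableOn two_ne_zero) hu_int hxfr
    fun h => hu_C2.contDiffAt ((isOpen_iUnion fun i => isOpen_Ioo).mem_nhds h)
end

section
/- Let s ∈ (0,1), let (a,b) be a bounded open interval, and let n ∈ ℕ∪{0}. Then for every polynomial p of degree at most n, the function x ↦ (−Δ)^s_ω p(x) coincides on (a,b) with a polynomial of degree at most n, and for all polynomials p, q of degree at most n, ∫_a^b ((−Δ)^s_ω p)(x) q(x) ω^s(x) dx = ∫_a^b p(x) ((−Δ)^s_ω q)(x) ω^s(x) dx; that is, (−Δ)^s_ω restricted to polynomials of degree at most n is self-adjoint with respect to the inner product (φ,ψ) = ∫_a^b φ ψ ω^s. -/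
open MeasureTheory Filter Set

/-- `WFL s a b φ x L` means the weighted fractional Laplacian `(−Δ)^s_ω φ (x)`
on the interval `(a,b)` (defined as a principal value) exists and equals `L`. -/
def WFL (s a b : ℝ) (φ : ℝ → ℝ) (x L : ℝ) : Prop :=
  Filter.Tendsto
    (fun ε : ℝ => (C1 s / (2 * s)) *
      ∫ y in Set.Ioo a b \ Set.Ioo (x - ε) (x + ε),
        Real.sign (x - y) * |x - y| ^ (-(2 * s)) *
          deriv (fun t => (t - a) ^ s * (b - t) ^ s * φ t) y)
    (nhdsWithin 0 (Set.Ioi 0)) (nhds L)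

/-!
The derivative of `ω^s p` is `ω^(s-1)` times a polynomial of degree at most `deg p + 1`, so
everything rests on the singular integral with kernel `sgn(x - y) |x - y|^(-2s)` applied to
polynomial multiples of `ω^(s-1)`.

For `ω^(s-1)` itself the principal value is `0`: with `A = x - a` and `B = b - x`, the Möbius map
`1/t ↦ 1/t - 1/A + 1/B` carries the integral over `(a, x)` to the integral over `(x, b)`, and
displaces the truncation radius `ε` only by `O(ε^2)`.

Write `y = x - (x - y)`. Since `(x - y) sgn(x - y) |x - y|^(-2s) = |x - y|^(1-2s)` is an affine
function of an even primitive of the kernel, multiplying a density by `y` turns its principal value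
`g` into `x g` minus a constant and a multiple of its potential, and `g` is the derivative of that
potential. Inductively, the potential of `p ω^(s-1)` is a polynomial of degree at most `deg p`, and
its derivative is the principal value. This lowers by one the degree gained from differentiating
`ω^s p`.

Finally, integrating by parts against `ω^s q` turns the bilinear form into the double integral of
a symmetric kernel against the derivatives of `ω^s p` and `ω^s q`, which is symmetric by Fubini. The
weight `ω^(s-1)` is nonnegative and the kernel has constant sign, so absolute integrability follows
from the potential of `ω^(s-1)` being constant.
-/

section RpowPrimitive

/-- The primitive of `t ↦ t ^ r` on `(0, ∞)` that vanishes at `D`. -/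
noncomputable def rpowPrimitive (r D t : ℝ) : ℝ :=
  if r = -1 then Real.log t - Real.log D else (t ^ (r + 1) - D ^ (r + 1)) / (r + 1)

variable {r D q t x y ε : ℝ}

lemma measurable_rpowPrimitive (r D : ℝ) : Measurable (rpowPrimitive r D) := by
  unfold rpowPrimitive
  split_ifs <;> fun_prop

lemma hasDerivAt_rpowPrimitive (r D : ℝ) (ht : 0 < t) :
    HasDerivAt (rpowPrimitive r D) (t ^ r) t := by
  unfold rpowPrimitive
  split_ifs with h
  · simpa [h, Real.rpow_neg_one] using (Real.hasDerivAt_log ht.ne').sub_const (Real.log D)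
  · have hr : r + 1 ≠ 0 := fun h0 => h (eq_neg_of_add_eq_zero_left h0)
    have hd := ((Real.hasDerivAt_rpow_const (p := r + 1) (Or.inl ht.ne')).sub_const
      (D ^ (r + 1))).div_const (r + 1)
    rwa [mul_div_cancel_left₀ _ hr, add_sub_cancel_right] at hd

@[simp]
lemma rpowPrimitive_self (r D : ℝ) : rpowPrimitive r D D = 0 := by
  simp [rpowPrimitive]

-- At `r = -1` both sides are `1`, which is what lets one recursion cover the logarithmic kernel.
lemma rpow_add_one_eq (r D t : ℝ) :
    t ^ (r + 1) = D ^ (r + 1) + (r + 1) * rpowPrimitive r D t := by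
  unfold rpowPrimitive
  split_ifs with h
  · simp [h]
  · have hr : r + 1 ≠ 0 := fun h0 => h (eq_neg_of_add_eq_zero_left h0)
    rw [mul_div_cancel₀ _ hr, add_sub_cancel]

lemma monotoneOn_rpowPrimitive (r D : ℝ) : MonotoneOn (rpowPrimitive r D) (Ioi 0) :=
  monotoneOn_of_hasDerivWithinAt_nonneg (convex_Ioi 0)
    (fun _ ht => (hasDerivAt_rpowPrimitive r D ht).continuousAt.continuousWithinAt)
    (fun _ ht => (hasDerivAt_rpowPrimitive r D (interior_subset ht)).hasDerivWithinAt)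
    (fun _ ht => Real.rpow_nonneg (le_of_lt (interior_subset ht)) r)

lemma rpowPrimitive_nonpos (ht : 0 < t) (htD : t ≤ D) : rpowPrimitive r D t ≤ 0 :=
  rpowPrimitive_self r D ▸ monotoneOn_rpowPrimitive r D ht (ht.trans_le htD) htD

lemma antitoneOn_rpowPrimitive_add_rpow (hq : q < 0) (hqr : q ≤ r + 1) :
    AntitoneOn (fun t => rpowPrimitive r D t + D ^ (r + 1 - q) / (-q) * t ^ q) (Ioc 0 D) := by
  have hderiv : ∀ t, 0 < t → HasDerivAt
      (fun t => rpowPrimitive r D t + D ^ (r + 1 - q) / (-q) * t ^ q)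
      (t ^ r + D ^ (r + 1 - q) / (-q) * (q * t ^ (q - 1))) t := fun t ht =>
    (hasDerivAt_rpowPrimitive r D ht).add
      ((Real.hasDerivAt_rpow_const (Or.inl ht.ne')).const_mul _)
  refine antitoneOn_of_hasDerivWithinAt_nonpos (convex_Ioc 0 D)
    (fun t ht => (hderiv t ht.1).continuousAt.continuousWithinAt)
    (fun t ht => (hderiv t (interior_subset ht).1).hasDerivWithinAt) fun t ht => ?_
  obtain ⟨ht0, htD⟩ := interior_subset ht
  have hsplit : t ^ r = t ^ (r + 1 - q) * t ^ (q - 1) := by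
    rw [← Real.rpow_add ht0]; congr 1; ring
  have hle : t ^ (r + 1 - q) * t ^ (q - 1) ≤ D ^ (r + 1 - q) * t ^ (q - 1) := by
    gcongr
  have hcancel : D ^ (r + 1 - q) / (-q) * (q * t ^ (q - 1)) =
      -(D ^ (r + 1 - q) * t ^ (q - 1)) := by
    have := hq.ne
    field_simp
  rw [hsplit, hcancel]
  linarith

lemma abs_rpowPrimitive_le (hq : q < 0) (hqr : q ≤ r + 1) (ht : 0 < t) (htD : t ≤ D) :
    |rpowPrimitive r D t| ≤ D ^ (r + 1 - q) / (-q) * t ^ q := by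
  have hD : 0 < D := ht.trans_le htD
  have hcmp := antitoneOn_rpowPrimitive_add_rpow hq hqr ⟨ht, htD⟩ ⟨hD, le_rfl⟩ htD
  have hpos : 0 ≤ D ^ (r + 1 - q) / (-q) * D ^ q := by
    have := neg_pos.2 hq
    positivity
  simp only [rpowPrimitive_self] at hcmp
  rw [abs_of_nonpos (rpowPrimitive_nonpos ht htD)]
  linarith

lemma abs_rpowPrimitive_sub_le (hr : r ≤ 0) (hε : 0 < ε) (hx : ε ≤ x) (hy : ε ≤ y) :
    |rpowPrimitive r D y - rpowPrimitive r D x| ≤ ε ^ r * |y - x| :=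
  (convex_Ici ε).norm_image_sub_le_of_norm_hasDerivWithin_le (f' := fun t => t ^ r)
    (fun t ht => (hasDerivAt_rpowPrimitive r D (hε.trans_le ht)).hasDerivWithinAt)
    (fun t ht => by
      rw [Real.norm_of_nonneg (Real.rpow_nonneg (hε.le.trans ht) r)]
      exact Real.rpow_le_rpow_of_nonpos hε ht hr) hx hy

end RpowPrimitive

section OddKernel

/-- The odd kernel `sgn(z) |z| ^ r`, of which `z ↦ rpowPrimitive r D |z|` is a primitive. -/
noncomputable def oddRpow (r z : ℝ) : ℝ := Real.sign z * |z| ^ r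

variable {r D ε z : ℝ}

lemma measurable_oddRpow (r : ℝ) : Measurable (oddRpow r) := by
  have hsign : Measurable Real.sign :=
    Measurable.ite measurableSet_Iio measurable_const
      (Measurable.ite measurableSet_Ioi measurable_const measurable_const)
  exact hsign.mul (by fun_prop)

lemma oddRpow_of_pos (hz : 0 < z) : oddRpow r z = z ^ r := by
  rw [oddRpow, Real.sign_of_pos hz, abs_of_pos hz, one_mul]

lemma oddRpow_of_neg (hz : z < 0) : oddRpow r z = -(-z) ^ r := by
  rw [oddRpow, Real.sign_of_neg hz, abs_of_neg hz, neg_one_mul]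

lemma abs_oddRpow (hz : z ≠ 0) : |oddRpow r z| = |z| ^ r := by
  rcases hz.lt_or_gt with hz | hz
  · rw [oddRpow_of_neg hz, abs_neg, Real.abs_rpow_of_nonneg (by linarith), abs_neg]
  · rw [oddRpow_of_pos hz, Real.abs_rpow_of_nonneg hz.le]

lemma mul_oddRpow (hz : z ≠ 0) : z * oddRpow r z = |z| ^ (r + 1) := by
  rw [Real.rpow_add_one (abs_ne_zero.2 hz)]
  rcases hz.lt_or_gt with hz | hz
  · rw [oddRpow_of_neg hz, abs_of_neg hz]; ring
  · rw [oddRpow_of_pos hz, abs_of_pos hz]; ring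

lemma abs_oddRpow_le (hr : r ≤ 0) (hε : 0 < ε) (hz : ε ≤ |z|) : |oddRpow r z| ≤ ε ^ r := by
  rw [abs_oddRpow (abs_pos.1 (hε.trans_le hz))]
  exact Real.rpow_le_rpow_of_nonpos hε hz hr

lemma hasDerivAt_rpowPrimitive_abs (r D : ℝ) (hz : z ≠ 0) :
    HasDerivAt (fun z => rpowPrimitive r D |z|) (oddRpow r z) z := by
  have habs : HasDerivAt (fun z : ℝ => |z|) (Real.sign z) z := by
    rcases hz.lt_or_gt with hz | hz
    · rw [Real.sign_of_neg hz]; exact hasDerivAt_abs_neg hz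
    · rw [Real.sign_of_pos hz]; exact hasDerivAt_abs_pos hz
  rw [oddRpow, mul_comm]
  exact (hasDerivAt_rpowPrimitive r D (abs_pos.2 hz)).comp z habs

lemma hasDerivAt_rpowPrimitive_max (r D : ℝ) (hε : 0 < ε) (hz : |z| ≠ ε) :
    HasDerivAt (fun z => rpowPrimitive r D (max |z| ε)) (if ε ≤ |z| then oddRpow r z else 0) z := by
  rcases hz.lt_or_gt with hz | hz
  · rw [if_neg hz.not_ge]
    refine (hasDerivAt_const z (rpowPrimitive r D ε)).congr_of_eventuallyEq ?_
    filter_upwards [continuous_abs.continuousAt.eventually (gt_mem_nhds hz)] with w hw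
    rw [max_eq_right (le_of_lt hw)]
  · rw [if_pos hz.le]
    refine (hasDerivAt_rpowPrimitive_abs r D (abs_pos.1 (hε.trans hz))).congr_of_eventuallyEq ?_
    filter_upwards [continuous_abs.continuousAt.eventually (lt_mem_nhds hz)] with w hw
    rw [max_eq_left (le_of_lt hw)]

lemma abs_rpowPrimitive_max_sub_le (hr : r ≤ 0) (hε : 0 < ε) (z w : ℝ) :
    |rpowPrimitive r D (max |z| ε) - rpowPrimitive r D (max |w| ε)| ≤ ε ^ r * |z - w| :=
  calc |rpowPrimitive r D (max |z| ε) - rpowPrimitive r D (max |w| ε)|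
      ≤ ε ^ r * |max |z| ε - max |w| ε| :=
        abs_rpowPrimitive_sub_le hr hε (le_max_right _ _) (le_max_right _ _)
    _ ≤ ε ^ r * |z - w| := by
        refine mul_le_mul_of_nonneg_left ?_ (Real.rpow_nonneg hε.le r)
        exact (abs_max_sub_max_le_abs _ _ _).trans (abs_abs_sub_abs_le_abs_sub z w)

end OddKernel

section SingularIntegrals

open Topology

variable {a b q ε x y : ℝ} {f : ℝ → ℝ}

lemma mem_Ioo_sub_add_iff_abs_lt : y ∈ Ioo (x - ε) (x + ε) ↔ |x - y| < ε := by
  rw [← Real.ball_eq_Ioo, Metric.mem_ball', Real.dist_eq]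

lemma abs_sub_lt_of_mem_Ioo (hx : x ∈ Ioo a b) (hy : y ∈ Ioo a b) : |x - y| < b - a :=
  abs_sub_lt_iff.2 ⟨by linarith [hx.2, hy.1], by linarith [hx.1, hy.2]⟩

lemma ae_restrict_ne (x : ℝ) (S : Set ℝ) : ∀ᵐ y ∂volume.restrict S, y ≠ x :=
  compl_mem_ae_iff.2 (measure_singleton x)

lemma intervalIntegrable_abs_rpow (hq : -1 < q) (c d : ℝ) :
    IntervalIntegrable (fun z : ℝ => |z| ^ q) volume c d := by
  refine intervalIntegrable_of_even (fun z => by rw [abs_neg]) fun z hz => ?_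
  refine (intervalIntegral.intervalIntegrable_rpow' hq).congr fun w hw => ?_
  rw [uIoc_of_le hz.le] at hw
  simp only [abs_of_pos hw.1]

lemma integrableOn_abs_sub_rpow (hq : -1 < q) (hε : 0 ≤ ε) (x : ℝ) :
    IntegrableOn (fun y => |x - y| ^ q) (Ioo (x - ε) (x + ε)) := by
  have hshift := (intervalIntegrable_abs_rpow hq (x - (x + ε)) (x - (x - ε))).comp_sub_left x
  rw [sub_sub_cancel, sub_sub_cancel] at hshift
  exact (intervalIntegrable_iff_integrableOn_Ioo_of_le (by linarith)).1 hshift.symm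

lemma integral_Ioo_abs_sub_rpow (hq : -1 < q) (hε : 0 ≤ ε) (x : ℝ) :
    ∫ y in Ioo (x - ε) (x + ε), |x - y| ^ q = 2 * (ε ^ (q + 1) / (q + 1)) := by
  have hhalf : ∫ z in (0 : ℝ)..ε, |z| ^ q = ε ^ (q + 1) / (q + 1) := by
    have habs : EqOn (fun z : ℝ => |z| ^ q) (fun z => z ^ q) (uIcc 0 ε) := fun z hz => by
      rw [uIcc_of_le hε] at hz
      simp only [abs_of_nonneg hz.1]
    rw [intervalIntegral.integral_congr habs, integral_rpow (Or.inl hq),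
      Real.zero_rpow (by linarith), sub_zero]
  have hneg : ∫ z in (-ε)..0, |z| ^ q = ∫ z in (0 : ℝ)..ε, |z| ^ q := by
    simpa only [abs_neg, neg_zero] using
      (intervalIntegral.integral_comp_neg (a := 0) (b := ε) fun z : ℝ => |z| ^ q).symm
  rw [← integral_Ioc_eq_integral_Ioo, ← intervalIntegral.integral_of_le (by linarith),
    intervalIntegral.integral_comp_sub_left (fun z => |z| ^ q) x, sub_add_cancel_left,
    sub_sub_cancel, ← intervalIntegral.integral_add_adjacent_intervals
      (intervalIntegrable_abs_rpow hq _ _) (intervalIntegrable_abs_rpow hq 0 _), hneg, hhalf]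
  ring

lemma integrableOn_abs_sub_rpow_mul (hq : -1 < q) (hq0 : q ≤ 0) (hf : IntegrableOn f (Ioo a b))
    (hcont : ContinuousAt f x) (hx : x ∈ Ioo a b) :
    IntegrableOn (fun y => |x - y| ^ q * f y) (Ioo a b) := by
  obtain ⟨δ, hδ, hbound⟩ := Metric.eventually_nhds_iff.1
    (hcont.abs.eventually (gt_mem_nhds (lt_add_one |f x|)))
  have hkernel : IntegrableOn (fun y => |x - y| ^ q) (Ioo a b) :=
    (integrableOn_abs_sub_rpow hq (by linarith [hx.1, hx.2]) x).mono_set fun y hy =>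
      mem_Ioo_sub_add_iff_abs_lt.2 (abs_sub_lt_of_mem_Ioo hx hy)
  refine ((hkernel.const_mul (|f x| + 1)).add (hf.abs.const_mul (δ ^ q))).mono'
    (hkernel.aestronglyMeasurable.mul hf.aestronglyMeasurable) (.of_forall fun y => ?_)
  have hker0 : 0 ≤ |x - y| ^ q := Real.rpow_nonneg (abs_nonneg _) _
  rw [norm_mul, Real.norm_of_nonneg hker0, Real.norm_eq_abs]
  rcases lt_or_ge |x - y| δ with hnear | hfar
  · have hfy : |f y| ≤ |f x| + 1 := (hbound (by rwa [dist_comm, Real.dist_eq])).le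
    calc |x - y| ^ q * |f y| ≤ (|f x| + 1) * |x - y| ^ q := by rw [mul_comm]; gcongr
      _ ≤ _ := le_add_of_nonneg_right (by positivity)
  · calc |x - y| ^ q * |f y| ≤ δ ^ q * |f y| :=
          mul_le_mul_of_nonneg_right (Real.rpow_le_rpow_of_nonpos hδ hfar hq0) (abs_nonneg _)
      _ ≤ _ := le_add_of_nonneg_left (by positivity)

lemma tendstoLocallyUniformlyOn_const {ι α β : Type*} [TopologicalSpace α] [UniformSpace β]
    (g : α → β) (l : Filter ι) (s : Set α) : TendstoLocallyUniformlyOn (fun _ => g) g l s :=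
  fun _ hu _ _ => ⟨s, self_mem_nhdsWithin, .of_forall fun _ _ _ => refl_mem_uniformity hu⟩

lemma abs_setIntegral_abs_sub_rpow_mul_le {M : ℝ} (hq : -1 < q) (hε : 0 ≤ ε)
    (hM : ∀ y ∈ Ioo (x - ε) (x + ε), |f y| ≤ M) :
    |∫ y in Ioo (x - ε) (x + ε), |x - y| ^ q * f y| ≤ M * (2 * (ε ^ (q + 1) / (q + 1))) := by
  rw [← integral_Ioo_abs_sub_rpow hq hε x, ← integral_const_mul, ← Real.norm_eq_abs]
  refine norm_integral_le_of_norm_le ((integrableOn_abs_sub_rpow hq hε x).const_mul M) ?_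
  filter_upwards [ae_restrict_mem measurableSet_Ioo] with y hy
  have hker0 : 0 ≤ |x - y| ^ q := Real.rpow_nonneg (abs_nonneg _) _
  rw [norm_mul, Real.norm_of_nonneg hker0, Real.norm_eq_abs, mul_comm]
  exact mul_le_mul_of_nonneg_right (hM y hy) hker0

lemma tendsto_nhdsGT_rpow_zero {p : ℝ} (hp : 0 < p) :
    Tendsto (fun ε : ℝ => ε ^ p) (𝓝[>] 0) (𝓝 0) := by
  simpa [Real.zero_rpow hp.ne'] using
    (Real.continuousAt_rpow_const 0 p (Or.inr hp.le)).tendsto.mono_left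
      (nhdsWithin_le_nhds (s := Ioi 0))

lemma tendstoLocallyUniformlyOn_integral_abs_sub_rpow_mul (hq : -1 < q)
    (hcont : ContinuousOn f (Ioo a b))
    (hint : ∀ x ∈ Ioo a b, IntegrableOn (fun y => |x - y| ^ q * f y) (Ioo a b)) :
    TendstoLocallyUniformlyOn
      (fun ε x => ∫ y in Ioo a b \ Ioo (x - ε) (x + ε), |x - y| ^ q * f y)
      (fun x => ∫ y in Ioo a b, |x - y| ^ q * f y) (𝓝[>] 0) (Ioo a b) := by
  rw [Metric.tendstoLocallyUniformlyOn_iff]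
  intro η hη x₀ hx₀
  have hnhds : Ioo a b ∈ 𝓝 x₀ := Ioo_mem_nhds hx₀.1 hx₀.2
  obtain ⟨δ, hδ, hball⟩ := Metric.eventually_nhds_iff.1 <|
    (show ∀ᶠ y in 𝓝 x₀, y ∈ Ioo a b from hnhds).and
      ((hcont.continuousAt hnhds).abs.eventually (gt_mem_nhds (lt_add_one |f x₀|)))
  have hrate : Tendsto (fun ε : ℝ => (|f x₀| + 1) * (2 * (ε ^ (q + 1) / (q + 1)))) (𝓝[>] 0)
      (𝓝 0) := by
    simpa using (((tendsto_nhdsGT_rpow_zero (p := q + 1) (by linarith)).div_const _).const_mul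
      2).const_mul (|f x₀| + 1)
  refine ⟨Metric.ball x₀ (δ / 2), mem_nhdsWithin_of_mem_nhds (Metric.ball_mem_nhds _ (half_pos hδ)),
    ?_⟩
  filter_upwards [hrate.eventually (gt_mem_nhds hη),
    nhdsWithin_le_nhds (gt_mem_nhds (half_pos hδ)), self_mem_nhdsWithin] with ε hεη hεδ hε x hx
  have hnear : ∀ y ∈ Ioo (x - ε) (x + ε), dist y x₀ < δ := fun y hy => by
    rw [← Real.ball_eq_Ioo, Metric.mem_ball] at hy
    linarith [dist_triangle y x x₀, Metric.mem_ball.1 hx]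
  have hxab : x ∈ Ioo a b := (hball (hnear x ⟨by linarith [hε.out], by linarith [hε.out]⟩)).1
  rw [setIntegral_sdiff measurableSet_Ioo (hint x hxab) fun y hy => (hball (hnear y hy)).1,
    Real.dist_eq, sub_sub_cancel]
  exact (abs_setIntegral_abs_sub_rpow_mul_le hq hε.out.le
    fun y hy => (hball (hnear y hy)).2.le).trans_lt hεη

end SingularIntegrals

section PrincipalValue

open Topology

/-- The truncated singular integral with kernel `sgn(x - y) |x - y| ^ r` over `(a, b)`. -/
noncomputable def truncatedTransform (r a b : ℝ) (f : ℝ → ℝ) (ε x : ℝ) : ℝ :=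
  ∫ y in Ioo a b \ Ioo (x - ε) (x + ε), oddRpow r (x - y) * f y

/-- The principal value of the singular integral of `f` is `g`. Convergence is required locally
uniformly in `x`, so that `g` can be recognized as the derivative of `rpowPotential`. -/
def HasPrincipalValue (r a b : ℝ) (f g : ℝ → ℝ) : Prop :=
  TendstoLocallyUniformlyOn (truncatedTransform r a b f) g (𝓝[>] 0) (Ioo a b)

/-- The potential of `f` for the kernel `rpowPrimitive r (b - a) |x - y|`, which is symmetric and
of constant sign on `(a, b)`. -/
noncomputable def rpowPotential (r a b : ℝ) (f : ℝ → ℝ) (x : ℝ) : ℝ :=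
  ∫ y in Ioo a b, rpowPrimitive r (b - a) |x - y| * f y

/-- `rpowPotential` with the kernel frozen at distances below `ε`, which makes it differentiable
under the integral sign. -/
noncomputable def regularizedPotential (r a b : ℝ) (f : ℝ → ℝ) (ε x : ℝ) : ℝ :=
  ∫ y in Ioo a b, rpowPrimitive r (b - a) (max |x - y| ε) * f y

variable {r a b ε x : ℝ} {f f₁ f₂ g g₁ g₂ : ℝ → ℝ}

lemma integrableOn_rpowPrimitive_mul (hr : -2 < r) (hf : IntegrableOn f (Ioo a b))
    (hcont : ContinuousAt f x) (hx : x ∈ Ioo a b) :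
    IntegrableOn (fun y => rpowPrimitive r (b - a) |x - y| * f y) (Ioo a b) := by
  obtain ⟨q, hq, hq0, hqr⟩ : ∃ q : ℝ, -1 < q ∧ q < 0 ∧ q ≤ r + 1 :=
    ⟨min (r + 1) (-1 / 2), lt_min (by linarith) (by norm_num),
      (min_le_right _ _).trans_lt (by norm_num), min_le_left _ _⟩
  have hmeas : Measurable fun y => rpowPrimitive r (b - a) |x - y| :=
    (measurable_rpowPrimitive r (b - a)).comp (by fun_prop)
  refine ((integrableOn_abs_sub_rpow_mul hq hq0.le hf hcont hx).norm.const_mul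
    ((b - a) ^ (r + 1 - q) / (-q))).mono'
    (hmeas.aestronglyMeasurable.mul hf.aestronglyMeasurable) ?_
  filter_upwards [ae_restrict_ne x (Ioo a b), ae_restrict_mem measurableSet_Ioo] with y hne hy
  rw [norm_mul, norm_mul, ← mul_assoc, Real.norm_of_nonneg (Real.rpow_nonneg (abs_nonneg _) q)]
  exact mul_le_mul_of_nonneg_right (abs_rpowPrimitive_le hq0 hqr
    (abs_pos.2 (sub_ne_zero.2 hne.symm)) (abs_sub_lt_of_mem_Ioo hx hy).le) (norm_nonneg _)

lemma aestronglyMeasurable_regularized_mul (hf : IntegrableOn f (Ioo a b)) (ε x : ℝ) :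
    AEStronglyMeasurable (fun y => rpowPrimitive r (b - a) (max |x - y| ε) * f y)
      (volume.restrict (Ioo a b)) :=
  ((measurable_rpowPrimitive r (b - a)).comp
    (by fun_prop : Measurable fun y => max |x - y| ε)).aestronglyMeasurable.mul
    hf.aestronglyMeasurable

lemma tendsto_regularizedPotential (hr : -2 < r) (hf : IntegrableOn f (Ioo a b))
    (hcont : ContinuousAt f x) (hx : x ∈ Ioo a b) :
    Tendsto (fun ε => regularizedPotential r a b f ε x) (𝓝[>] 0)
      (𝓝 (rpowPotential r a b f x)) := by
  refine tendsto_integral_filter_of_dominated_convergence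
    (fun y => ‖rpowPrimitive r (b - a) |x - y| * f y‖)
    (.of_forall fun ε => aestronglyMeasurable_regularized_mul hf ε x) ?_
    (integrableOn_rpowPrimitive_mul hr hf hcont hx).norm ?_
  · filter_upwards [nhdsWithin_le_nhds (gt_mem_nhds (sub_pos.2 (hx.1.trans hx.2)))] with ε hε
    filter_upwards [ae_restrict_ne x (Ioo a b), ae_restrict_mem measurableSet_Ioo] with y hne hy
    have hpos : 0 < |x - y| := abs_pos.2 (sub_ne_zero.2 hne.symm)
    have hle : |x - y| ≤ b - a := (abs_sub_lt_of_mem_Ioo hx hy).le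
    rw [norm_mul, norm_mul,
      Real.norm_of_nonpos (rpowPrimitive_nonpos (lt_max_of_lt_left hpos) (max_le hle hε.le)),
      Real.norm_of_nonpos (rpowPrimitive_nonpos hpos hle)]
    exact mul_le_mul_of_nonneg_right (neg_le_neg (monotoneOn_rpowPrimitive r _ hpos
      (lt_max_of_lt_left hpos) (le_max_left _ _))) (norm_nonneg _)
  · filter_upwards [ae_restrict_ne x (Ioo a b)] with y hne
    refine tendsto_const_nhds.congr' ?_
    filter_upwards [nhdsWithin_le_nhds (gt_mem_nhds (abs_pos.2 (sub_ne_zero.2 hne.symm)))] with ε hε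
    rw [max_eq_left hε.le]

lemma integrableOn_regularized_mul (hf : IntegrableOn f (Ioo a b)) (hε : 0 < ε) (x : ℝ) :
    IntegrableOn (fun y => rpowPrimitive r (b - a) (max |x - y| ε) * f y) (Ioo a b) := by
  have hkernel : ContinuousOn (fun y => rpowPrimitive r (b - a) (max |x - y| ε)) (Icc a b) :=
    ContinuousOn.comp (t := Ioi 0) (fun t ht =>
      (hasDerivAt_rpowPrimitive r (b - a) ht).continuousAt.continuousWithinAt) (by fun_prop)
      fun y _ => lt_max_of_lt_right hε
  exact hf.continuousOn_mul_of_subset hkernel isCompact_Icc measurableSet_Ioo Ioo_subset_Icc_self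

lemma hasDerivAt_regularizedPotential (hr : r ≤ 0) (hf : IntegrableOn f (Ioo a b)) (hε : 0 < ε)
    (x : ℝ) :
    HasDerivAt (regularizedPotential r a b f ε) (truncatedTransform r a b f ε x) x := by
  have hmeas : Measurable fun y => oddRpow r (x - y) := (measurable_oddRpow r).comp (by fun_prop)
  have hlip : ∀ᵐ y ∂volume.restrict (Ioo a b), LipschitzOnWith (Real.nnabs (ε ^ r * |f y|))
      (fun x => rpowPrimitive r (b - a) (max |x - y| ε) * f y) univ :=
    .of_forall fun y => LipschitzOnWith.of_dist_le_mul fun u _ v _ => by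
      rw [Real.dist_eq, Real.dist_eq, ← sub_mul, abs_mul, Real.coe_nnabs,
        abs_of_nonneg (mul_nonneg (Real.rpow_nonneg hε.le r) (abs_nonneg (f y))), mul_right_comm]
      refine mul_le_mul_of_nonneg_right ?_ (abs_nonneg (f y))
      simpa only [sub_sub_sub_cancel_right] using
        abs_rpowPrimitive_max_sub_le (D := b - a) hr hε (u - y) (v - y)
  have hderiv : ∀ᵐ y ∂volume.restrict (Ioo a b),
      HasDerivAt (fun x => rpowPrimitive r (b - a) (max |x - y| ε) * f y)
        ((Ioo (x - ε) (x + ε))ᶜ.indicator (fun y => oddRpow r (x - y) * f y) y) x := by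
    filter_upwards [ae_restrict_ne (x - ε) (Ioo a b), ae_restrict_ne (x + ε) (Ioo a b)]
      with y hleft hright
    have hne : |x - y| ≠ ε := fun h => by
      rcases (abs_eq hε.le).1 h with h | h
      · exact hleft (by linarith)
      · exact hright (by linarith)
    refine (((hasDerivAt_rpowPrimitive_max r (b - a) hε hne).comp_sub_const x y).mul_const
      (f y)).congr_deriv ?_
    simp only [indicator_apply, mem_compl_iff, mem_Ioo_sub_add_iff_abs_lt, not_lt, ite_mul,
      zero_mul]
  have hmain := hasDerivAt_integral_of_dominated_loc_of_lip univ_mem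
    (.of_forall fun z => aestronglyMeasurable_regularized_mul hf ε z)
    (integrableOn_regularized_mul hf hε x)
    ((hmeas.aestronglyMeasurable.mul hf.aestronglyMeasurable).indicator measurableSet_Ioo.compl)
    hlip (hf.abs.const_mul _) hderiv
  exact hmain.2.congr_deriv (setIntegral_indicator measurableSet_Ioo.compl)

lemma HasPrincipalValue.hasDerivAt_rpowPotential (h : HasPrincipalValue r a b f g) (hr : -2 < r)
    (hr0 : r ≤ 0) (hf : IntegrableOn f (Ioo a b)) (hcont : ContinuousOn f (Ioo a b))
    (hx : x ∈ Ioo a b) : HasDerivAt (rpowPotential r a b f) (g x) x := by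
  refine hasDerivAt_of_tendstoLocallyUniformlyOn isOpen_Ioo h ?_ (fun y hy =>
    tendsto_regularizedPotential hr hf (hcont.continuousAt (Ioo_mem_nhds hy.1 hy.2)) hy) hx
  filter_upwards [self_mem_nhdsWithin] with ε hε y _
  exact hasDerivAt_regularizedPotential hr0 hf hε y

lemma integrableOn_oddRpow_mul (hr : r ≤ 0) (hf : IntegrableOn f (Ioo a b)) (hε : 0 < ε) (x : ℝ) :
    IntegrableOn (fun y => oddRpow r (x - y) * f y) (Ioo a b \ Ioo (x - ε) (x + ε)) := by
  have hmeas : Measurable fun y => oddRpow r (x - y) := (measurable_oddRpow r).comp (by fun_prop)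
  refine Integrable.bdd_mul (c := ε ^ r) (hf.mono_set sdiff_subset) hmeas.aestronglyMeasurable ?_
  filter_upwards [ae_restrict_mem (measurableSet_Ioo.diff measurableSet_Ioo)] with y hy
  exact abs_oddRpow_le hr hε (not_lt.1 (mem_Ioo_sub_add_iff_abs_lt.not.1 hy.2))

lemma HasPrincipalValue.add (h₁ : HasPrincipalValue r a b f₁ g₁)
    (h₂ : HasPrincipalValue r a b f₂ g₂) (hr : r ≤ 0) (hf₁ : IntegrableOn f₁ (Ioo a b))
    (hf₂ : IntegrableOn f₂ (Ioo a b)) :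
    HasPrincipalValue r a b (fun y => f₁ y + f₂ y) (fun x => g₁ x + g₂ x) := by
  refine TendstoLocallyUniformlyOn.congr_inseparable (TendstoLocallyUniformlyOn.fun_add h₁ h₂) ?_
  filter_upwards [self_mem_nhdsWithin] with ε hε x _
  refine .of_eq ?_
  simp only [truncatedTransform, mul_add]
  exact (integral_add (integrableOn_oddRpow_mul hr hf₁ hε x)
    (integrableOn_oddRpow_mul hr hf₂ hε x)).symm

lemma HasPrincipalValue.const_mul (h : HasPrincipalValue r a b f g) (c : ℝ) :
    HasPrincipalValue r a b (fun y => c * f y) (fun x => c * g x) := by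
  refine TendstoLocallyUniformlyOn.congr
    ((uniformContinuous_const_smul c).comp_tendstoLocallyUniformlyOn h) fun ε x _ => ?_
  simp only [truncatedTransform, mul_left_comm _ c, integral_const_mul, Function.comp_apply,
    smul_eq_mul]

lemma truncatedTransform_id_mul (hr : r ≤ 0) (hf : IntegrableOn f (Ioo a b))
    (hyf : IntegrableOn (fun y => y * f y) (Ioo a b)) (hε : 0 < ε) (x : ℝ) :
    truncatedTransform r a b (fun y => y * f y) ε x = x * truncatedTransform r a b f ε x -
      ∫ y in Ioo a b \ Ioo (x - ε) (x + ε), |x - y| ^ (r + 1) * f y := by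
  unfold truncatedTransform
  rw [eq_sub_iff_add_eq, ← eq_sub_iff_add_eq', ← integral_const_mul,
    ← integral_sub ((integrableOn_oddRpow_mul hr hf hε x).const_mul x)
      (integrableOn_oddRpow_mul hr hyf hε x)]
  refine setIntegral_congr_fun (measurableSet_Ioo.diff measurableSet_Ioo) fun y hy => ?_
  have hfar : ε ≤ |x - y| := not_lt.1 (mem_Ioo_sub_add_iff_abs_lt.not.1 hy.2)
  simp only [← mul_oddRpow (r := r) (abs_pos.1 (hε.trans_le hfar))]
  ring

lemma abs_sub_rpow_mul_eq (r a b : ℝ) (f : ℝ → ℝ) (x y : ℝ) :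
    |x - y| ^ (r + 1) * f y = (b - a) ^ (r + 1) * f y +
      (r + 1) * (rpowPrimitive r (b - a) |x - y| * f y) := by
  rw [rpow_add_one_eq r (b - a)]
  ring

lemma tendstoLocallyUniformlyOn_integral_abs_sub_rpow_add_one_mul (hr : -2 < r)
    (hf : IntegrableOn f (Ioo a b)) (hcont : ContinuousOn f (Ioo a b)) :
    TendstoLocallyUniformlyOn
      (fun ε x => ∫ y in Ioo a b \ Ioo (x - ε) (x + ε), |x - y| ^ (r + 1) * f y)
      (fun x => (b - a) ^ (r + 1) * (∫ y in Ioo a b, f y) + (r + 1) * rpowPotential r a b f x)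
      (𝓝[>] 0) (Ioo a b) := by
  have hpotential : ∀ x ∈ Ioo a b,
      IntegrableOn (fun y => rpowPrimitive r (b - a) |x - y| * f y) (Ioo a b) := fun x hx =>
    integrableOn_rpowPrimitive_mul hr hf (hcont.continuousAt (Ioo_mem_nhds hx.1 hx.2)) hx
  refine (tendstoLocallyUniformlyOn_integral_abs_sub_rpow_mul (by linarith) hcont
    fun x hx => ?_).congr_right fun x hx => ?_ <;>
    simp only [abs_sub_rpow_mul_eq r a b f]
  · exact (hf.const_mul _).add ((hpotential x hx).const_mul _)
  · rw [integral_add (hf.const_mul _) ((hpotential x hx).const_mul _), integral_const_mul,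
      integral_const_mul, rpowPotential]

lemma HasPrincipalValue.id_mul (h : HasPrincipalValue r a b f g) (hr : -2 < r) (hr0 : r ≤ 0)
    (hf : IntegrableOn f (Ioo a b)) (hcont : ContinuousOn f (Ioo a b))
    (hyf : IntegrableOn (fun y => y * f y) (Ioo a b)) (hg : ContinuousOn g (Ioo a b)) :
    HasPrincipalValue r a b (fun y => y * f y) fun x => x * g x -
      ((b - a) ^ (r + 1) * (∫ y in Ioo a b, f y) + (r + 1) * rpowPotential r a b f x) := by
  refine TendstoLocallyUniformlyOn.congr_inseparable (TendstoLocallyUniformlyOn.fun_sub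
    (((tendstoLocallyUniformlyOn_const (fun x : ℝ => x) _ _).fun_mul₀ h continuousOn_id hg))
    (tendstoLocallyUniformlyOn_integral_abs_sub_rpow_add_one_mul hr hf hcont)) ?_
  filter_upwards [self_mem_nhdsWithin] with ε hε x _
  exact .of_eq (truncatedTransform_id_mul hr0 hf hyf hε x).symm

lemma integral_rpowPotential_mul_comm
    (hint : IntegrableOn (fun z : ℝ × ℝ => rpowPrimitive r (b - a) |z.1 - z.2| * f z.2 * g z.1)
      (Ioo a b ×ˢ Ioo a b) (volume.prod volume)) :
    ∫ x in Ioo a b, rpowPotential r a b f x * g x =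
      ∫ x in Ioo a b, f x * rpowPotential r a b g x := by
  rw [IntegrableOn, ← Measure.prod_restrict] at hint
  simp only [rpowPotential, ← integral_mul_const, ← integral_const_mul]
  rw [integral_integral_swap hint]
  refine integral_congr_ae (.of_forall fun y => integral_congr_ae (.of_forall fun x => ?_))
  simp only [abs_sub_comm y x]
  ring

end PrincipalValue

section IntervalWeight

/-- The weight `((y - a) (b - y)) ^ α`, equal to `(y - a) ^ α (b - y) ^ α` on `(a, b)`; the
weight `ω^s` is the case `α = s`. -/
noncomputable def intervalWeight (α a b y : ℝ) : ℝ := ((y - a) * (b - y)) ^ α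

variable {α a b y : ℝ}

lemma intervalWeight_base_pos (hy : y ∈ Ioo a b) : 0 < (y - a) * (b - y) :=
  mul_pos (sub_pos.2 hy.1) (sub_pos.2 hy.2)

lemma intervalWeight_nonneg (hy : y ∈ Icc a b) : 0 ≤ intervalWeight α a b y :=
  Real.rpow_nonneg (mul_nonneg (sub_nonneg.2 hy.1) (sub_nonneg.2 hy.2)) α

lemma intervalWeight_eq_mul (hy : y ∈ Icc a b) :
    intervalWeight α a b y = (y - a) ^ α * (b - y) ^ α :=
  Real.mul_rpow (sub_nonneg.2 hy.1) (sub_nonneg.2 hy.2)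

lemma continuousOn_intervalWeight (α a b : ℝ) : ContinuousOn (intervalWeight α a b) (Ioo a b) :=
  ContinuousOn.rpow_const (by fun_prop) fun _ hy => Or.inl (intervalWeight_base_pos hy).ne'

lemma integrableOn_intervalWeight (hα : -1 < α) (a b : ℝ) :
    IntegrableOn (intervalWeight α a b) (Ioo a b) := by
  rcases le_or_gt b a with hba | hab
  · simp [Ioo_eq_empty hba.not_gt]
  have hleft : IntervalIntegrable (fun y => (y - a) ^ α) volume a ((a + b) / 2) := by
    simpa only [zero_add, sub_add_cancel] using (intervalIntegral.intervalIntegrable_rpow'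
      (a := 0) (b := (a + b) / 2 - a) hα).comp_sub_right a
  have hright : IntervalIntegrable (fun y => (b - y) ^ α) volume ((a + b) / 2) b := by
    simpa only [sub_zero, sub_sub_cancel] using ((intervalIntegral.intervalIntegrable_rpow'
      (a := 0) (b := b - (a + b) / 2) hα).comp_sub_left b).symm
  refine IntegrableOn.congr_fun (f := fun y => (y - a) ^ α * (b - y) ^ α) ?_
    (fun y hy => (intervalWeight_eq_mul (Ioo_subset_Icc_self hy)).symm) measurableSet_Ioo
  rw [← intervalIntegrable_iff_integrableOn_Ioo_of_le hab.le]
  refine (hleft.mul_continuousOn ?_).trans (hright.continuousOn_mul ?_) <;>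
    refine ContinuousOn.rpow_const (by fun_prop) fun y hy => Or.inl ?_ <;>
    rw [uIcc_of_le (by linarith)] at hy <;> linarith [hy.1, hy.2]

end IntervalWeight

section MobiusSwap

/-- The Möbius map carrying `(0, A)` onto `(0, B)` and exchanging the two one-sided integrals that
make up the singular integral of `intervalWeight (s - 1)`. -/
noncomputable def mobiusSwap (A B t : ℝ) : ℝ := (t⁻¹ - A⁻¹ + B⁻¹)⁻¹

/-- The one-sided integrand `t ^ (-2s) ((A - t) (B + t)) ^ (s - 1)`, at distance `t` from a point
with distances `A` and `B` to the ends of the interval. -/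
noncomputable def oneSidedIntegrand (s A B t : ℝ) : ℝ :=
  t ^ (-(2 * s)) * intervalWeight (s - 1) (-B) A t

variable {s A B t η ε : ℝ}

lemma mobiusSwap_self (A B : ℝ) : mobiusSwap A B A = B := by
  rw [mobiusSwap, sub_self, zero_add, inv_inv]

lemma inv_mobiusSwap_pos (hB : 0 < B) (ht : 0 < t) (htA : t ≤ A) :
    0 < t⁻¹ - A⁻¹ + B⁻¹ :=
  add_pos_of_nonneg_of_pos (sub_nonneg.2 (inv_anti₀ ht htA)) (inv_pos.2 hB)

lemma mobiusSwap_pos (hB : 0 < B) (ht : 0 < t) (htA : t ≤ A) : 0 < mobiusSwap A B t :=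
  inv_pos.2 (inv_mobiusSwap_pos hB ht htA)

lemma hasDerivAt_mobiusSwap (hB : 0 < B) (ht : 0 < t) (htA : t ≤ A) :
    HasDerivAt (mobiusSwap A B) ((mobiusSwap A B t / t) ^ 2) t := by
  refine ((((hasDerivAt_inv ht.ne').sub_const A⁻¹).add_const B⁻¹).inv
    (inv_mobiusSwap_pos hB ht htA).ne').congr_deriv ?_
  simp only [mobiusSwap, div_eq_mul_inv, mul_pow, inv_pow, neg_neg]
  ring

lemma sub_mul_add_mobiusSwap (hA : 0 < A) (hB : 0 < B) (ht : 0 < t) (htA : t ≤ A) :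
    (B - mobiusSwap A B t) * (A + mobiusSwap A B t) =
      (mobiusSwap A B t / t) ^ 2 * ((A - t) * (B + t)) := by
  have hm : 0 < mobiusSwap A B t := mobiusSwap_pos hB ht htA
  have hinv : (mobiusSwap A B t)⁻¹ = t⁻¹ - A⁻¹ + B⁻¹ := inv_inv _
  generalize mobiusSwap A B t = m at hm hinv ⊢
  have hleft : B - m = B * m * (t⁻¹ - A⁻¹) := by
    rw [← sub_eq_of_eq_add hinv]
    field_simp
  have hright : A + m = A * m * (t⁻¹ + B⁻¹) := by
    rw [show t⁻¹ + B⁻¹ = m⁻¹ + A⁻¹ by linarith]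
    field_simp
  rw [hleft, hright]
  field_simp

lemma oneSidedIntegrand_mobiusSwap (s : ℝ) (hA : 0 < A) (hB : 0 < B) (ht : 0 < t) (htA : t ≤ A) :
    oneSidedIntegrand s B A (mobiusSwap A B t) * (mobiusSwap A B t / t) ^ 2 =
      oneSidedIntegrand s A B t := by
  have hm : 0 < mobiusSwap A B t := mobiusSwap_pos hB ht htA
  have hbase : (mobiusSwap A B t - -A) * (B - mobiusSwap A B t) =
      (mobiusSwap A B t / t) ^ 2 * ((t - -B) * (A - t)) := by
    linear_combination sub_mul_add_mobiusSwap hA hB ht htA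
  rw [oneSidedIntegrand, oneSidedIntegrand, intervalWeight, intervalWeight, hbase]
  generalize mobiusSwap A B t = m at hm ⊢
  have hscale : ((m / t) ^ 2) ^ (s - 1) * (m / t) ^ 2 = (m / t) ^ (2 * s) := by
    have hmt : 0 < m / t := div_pos hm ht
    rw [← Real.rpow_natCast (m / t) 2, ← Real.rpow_mul hmt.le, ← Real.rpow_add hmt]
    congr 1
    push_cast
    ring
  have hpow : m ^ (-(2 * s)) * (m / t) ^ (2 * s) = t ^ (-(2 * s)) := by
    rw [Real.div_rpow hm.le ht.le, Real.rpow_neg hm.le, Real.rpow_neg ht.le]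
    field_simp
  rw [Real.mul_rpow (sq_nonneg _) (mul_nonneg (by linarith) (by linarith)), ← hpow, ← hscale]
  ring

lemma integral_oneSidedIntegrand_eq (s : ℝ) (hB : 0 < B) (hε : 0 < ε) (hεA : ε ≤ A) :
    ∫ t in ε..A, oneSidedIntegrand s A B t =
      ∫ t in mobiusSwap A B ε..B, oneSidedIntegrand s B A t := by
  have hderiv : ∀ t ∈ Icc ε A,
      HasDerivAt (mobiusSwap A B) ((mobiusSwap A B t / t) ^ 2) t := fun t ht =>
    hasDerivAt_mobiusSwap hB (hε.trans_le ht.1) ht.2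
  have hsubst := intervalIntegral.integral_comp_mul_deriv_of_deriv_nonneg
    (g := oneSidedIntegrand s B A)
    (fun t ht => (hderiv t (by rwa [uIcc_of_le hεA] at ht)).continuousAt.continuousWithinAt)
    (fun t ht => hderiv t (by
      rw [min_eq_left hεA, max_eq_right hεA] at ht
      exact Ioo_subset_Icc_self ht)) (fun t _ => sq_nonneg _)
  rw [mobiusSwap_self] at hsubst
  rw [← hsubst]
  refine intervalIntegral.integral_congr fun t ht => ?_
  rw [uIcc_of_le hεA] at ht
  exact (oneSidedIntegrand_mobiusSwap s (hε.trans_le hεA) hB (hε.trans_le ht.1) ht.2).symm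

lemma intervalIntegrable_oneSidedIntegrand (hs : 0 < s) (hB : 0 ≤ B) (hε : 0 < ε) (hεA : ε ≤ A) :
    IntervalIntegrable (oneSidedIntegrand s A B) volume ε A := by
  have hweight : IntervalIntegrable (intervalWeight (s - 1) (-B) A) volume ε A :=
    (intervalIntegrable_iff_integrableOn_Ioo_of_le hεA).2
      ((integrableOn_intervalWeight (by linarith) (-B) A).mono_set
        (Ioo_subset_Ioo_left (by linarith)))
  refine hweight.continuousOn_mul (continuousOn_id.rpow_const fun t ht => Or.inl ?_)
  rw [uIcc_of_le hεA] at ht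
  exact (hε.trans_le ht.1).ne'

lemma abs_inv_sub_inv_le (hη : 0 < η) (hA : η ≤ A) (hB : η ≤ B) : |B⁻¹ - A⁻¹| ≤ η⁻¹ :=
  abs_sub_le_of_nonneg_of_le (inv_nonneg.2 (hη.le.trans hB)) (inv_anti₀ hη hB)
    (inv_nonneg.2 (hη.le.trans hA)) (inv_anti₀ hη hA)

lemma mobiusSwap_mem_Icc (hA : η ≤ A) (hB : η ≤ B) (hε : 0 < ε) (hεη : 4 * ε ≤ η) :
    mobiusSwap A B ε ∈ Icc (ε / 2) (2 * ε) := by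
  have hη : 0 < η := by linarith
  have hperturb : |B⁻¹ - A⁻¹| ≤ ε⁻¹ / 4 :=
    calc |B⁻¹ - A⁻¹| ≤ η⁻¹ := abs_inv_sub_inv_le hη hA hB
      _ ≤ (4 * ε)⁻¹ := inv_anti₀ (by linarith) hεη
      _ = ε⁻¹ / 4 := by rw [mul_inv]; ring
  have hεinv : 0 < ε⁻¹ := inv_pos.2 hε
  obtain ⟨hlower, hupper⟩ := abs_le.1 hperturb
  constructor
  · rw [mobiusSwap, le_inv_comm₀ (by linarith) (by linarith), inv_div]
    linarith [div_eq_mul_inv 2 ε]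
  · rw [mobiusSwap, inv_le_comm₀ (by linarith) (by linarith), mul_inv]
    linarith

lemma abs_sub_mobiusSwap_le (hA : η ≤ A) (hB : η ≤ B) (hε : 0 < ε) (hεη : 4 * ε ≤ η) :
    |ε - mobiusSwap A B ε| ≤ 2 * ε ^ 2 / η := by
  have hη : 0 < η := by linarith
  obtain ⟨hlower, hupper⟩ := mobiusSwap_mem_Icc hA hB hε hεη
  have hm : 0 < mobiusSwap A B ε := by linarith
  have hdiff : ε - mobiusSwap A B ε = ε * mobiusSwap A B ε * (B⁻¹ - A⁻¹) := by
    have hinv : (mobiusSwap A B ε)⁻¹ = ε⁻¹ - A⁻¹ + B⁻¹ := inv_inv _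
    rw [show B⁻¹ - A⁻¹ = (mobiusSwap A B ε)⁻¹ - ε⁻¹ by rw [hinv]; ring]
    field_simp
  calc |ε - mobiusSwap A B ε| = ε * mobiusSwap A B ε * |B⁻¹ - A⁻¹| := by
        rw [hdiff, abs_mul, abs_of_pos (mul_pos hε hm)]
    _ ≤ ε * (2 * ε) * η⁻¹ := by gcongr; exact abs_inv_sub_inv_le hη hA hB
    _ = 2 * ε ^ 2 / η := by ring

lemma abs_oneSidedIntegrand_le (hs : 0 < s) (hs1 : s < 1) (hA : η ≤ A) (hB : η ≤ B) (hε : 0 < ε)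
    (hεη : 4 * ε ≤ η) (ht : t ∈ Icc (ε / 2) (2 * ε)) :
    |oneSidedIntegrand s A B t| ≤ (ε / 2) ^ (-(2 * s)) * ((η / 2) ^ 2) ^ (s - 1) := by
  have hbase : (η / 2) ^ 2 ≤ (t - -B) * (A - t) := by
    rw [sq]
    exact mul_le_mul (by linarith [ht.1]) (by linarith [ht.2]) (by linarith) (by linarith [ht.1])
  have hη : 0 < (η / 2) ^ 2 := pow_pos (by linarith) 2
  rw [oneSidedIntegrand, intervalWeight, abs_of_nonneg (mul_nonneg
    (Real.rpow_nonneg (by linarith [ht.1]) _) (Real.rpow_nonneg (hη.le.trans hbase) _))]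
  exact mul_le_mul (Real.rpow_le_rpow_of_nonpos (half_pos hε) ht.1 (by linarith))
    (Real.rpow_le_rpow_of_nonpos hη hbase (by linarith)) (Real.rpow_nonneg (hη.le.trans hbase) _)
    (Real.rpow_nonneg (half_pos hε).le _)

-- The substitution cancels everything but the integral between `ε` and its image, two points at
-- distance `O(ε ^ 2)`.
lemma abs_integral_oneSidedIntegrand_sub_le (hs : 0 < s) (hs1 : s < 1) (hA : η ≤ A) (hB : η ≤ B)
    (hε : 0 < ε) (hεη : 4 * ε ≤ η) :
    |(∫ t in ε..A, oneSidedIntegrand s A B t) - ∫ t in ε..B, oneSidedIntegrand s B A t| ≤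
      (ε / 2) ^ (-(2 * s)) * ((η / 2) ^ 2) ^ (s - 1) * (2 * ε ^ 2 / η) := by
  have hm := mobiusSwap_mem_Icc hA hB hε hεη
  have hε' : IntervalIntegrable (oneSidedIntegrand s B A) volume ε B :=
    intervalIntegrable_oneSidedIntegrand hs (by linarith) hε (by linarith)
  have hm' : IntervalIntegrable (oneSidedIntegrand s B A) volume (mobiusSwap A B ε) B :=
    intervalIntegrable_oneSidedIntegrand hs (by linarith) (by linarith [hm.1]) (by linarith [hm.2])
  rw [integral_oneSidedIntegrand_eq s (by linarith) hε (by linarith),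
    ← intervalIntegral.integral_add_adjacent_intervals (hm'.trans hε'.symm) hε',
    add_sub_cancel_right]
  have hbound : ∀ t ∈ uIoc (mobiusSwap A B ε) ε,
      ‖oneSidedIntegrand s B A t‖ ≤ (ε / 2) ^ (-(2 * s)) * ((η / 2) ^ 2) ^ (s - 1) := fun t ht =>
    abs_oneSidedIntegrand_le hs hs1 hB hA hε hεη
      (uIcc_subset_Icc hm ⟨by linarith, by linarith⟩ (uIoc_subset_uIcc ht))
  exact (intervalIntegral.norm_integral_le_of_norm_le_const hbound).trans
    (mul_le_mul_of_nonneg_left (abs_sub_mobiusSwap_le hA hB hε hεη) (by positivity))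

end MobiusSwap

section WeightPrincipalValue

open Topology

variable {s r a b x ε η : ℝ} {f : ℝ → ℝ}

lemma Ioo_sdiff_Ioo_eq_union (hε : 0 < ε) (hleft : ε < x - a) (hright : ε < b - x) :
    Ioo a b \ Ioo (x - ε) (x + ε) = Ioc a (x - ε) ∪ Ico (x + ε) b := by
  ext y
  simp only [Set.mem_sdiff, mem_union, mem_Ioo, mem_Ioc, mem_Ico]
  grind

lemma integral_Ioc_oddRpow_mul (r : ℝ) (f : ℝ → ℝ) (hε : 0 < ε) (hleft : ε < x - a) :
    ∫ y in Ioc a (x - ε), oddRpow r (x - y) * f y = ∫ t in ε..x - a, t ^ r * f (x - t) := by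
  have hsubst := intervalIntegral.integral_comp_sub_left (a := ε) (b := x - a)
    (fun y => oddRpow r (x - y) * f y) x
  rw [sub_sub_cancel] at hsubst
  rw [← intervalIntegral.integral_of_le (by linarith), ← hsubst]
  refine intervalIntegral.integral_congr fun t ht => ?_
  rw [uIcc_of_le hleft.le] at ht
  simp only [sub_sub_cancel, oddRpow_of_pos (hε.trans_le ht.1)]

lemma integral_Ico_oddRpow_mul (r : ℝ) (f : ℝ → ℝ) (hε : 0 < ε) (hright : ε < b - x) :
    ∫ y in Ico (x + ε) b, oddRpow r (x - y) * f y = -∫ t in ε..b - x, t ^ r * f (x + t) := by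
  have hsubst := intervalIntegral.integral_comp_add_left (a := ε) (b := b - x)
    (fun y => oddRpow r (x - y) * f y) x
  rw [add_sub_cancel] at hsubst
  rw [integral_Ico_eq_integral_Ioo, ← integral_Ioc_eq_integral_Ioo,
    ← intervalIntegral.integral_of_le (by linarith), ← hsubst, ← intervalIntegral.integral_neg]
  refine intervalIntegral.integral_congr fun t ht => ?_
  rw [uIcc_of_le hright.le] at ht
  have hneg : x - (x + t) < 0 := by linarith [ht.1]
  simp only [oddRpow_of_neg hneg, neg_sub, add_sub_cancel_left, neg_mul]

lemma truncatedTransform_eq_sub (hr : r ≤ 0) (hf : IntegrableOn f (Ioo a b)) (hε : 0 < ε)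
    (hleft : ε < x - a) (hright : ε < b - x) :
    truncatedTransform r a b f ε x =
      (∫ t in ε..x - a, t ^ r * f (x - t)) - ∫ t in ε..b - x, t ^ r * f (x + t) := by
  have hint := integrableOn_oddRpow_mul hr hf hε x
  have hdisj : Disjoint (Ioc a (x - ε)) (Ico (x + ε) b) :=
    disjoint_left.2 fun y hy hy' => by linarith [hy.2, hy'.1]
  rw [Ioo_sdiff_Ioo_eq_union hε hleft hright, integrableOn_union] at hint
  rw [truncatedTransform, Ioo_sdiff_Ioo_eq_union hε hleft hright,
    setIntegral_union hdisj measurableSet_Ico hint.1 hint.2, integral_Ioc_oddRpow_mul r f hε hleft,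
    integral_Ico_oddRpow_mul r f hε hright, ← sub_eq_add_neg]

lemma truncatedTransform_intervalWeight (hs : 0 < s) (hε : 0 < ε) (hleft : ε < x - a)
    (hright : ε < b - x) :
    truncatedTransform (-(2 * s)) a b (intervalWeight (s - 1) a b) ε x =
      (∫ t in ε..x - a, oneSidedIntegrand s (x - a) (b - x) t) -
        ∫ t in ε..b - x, oneSidedIntegrand s (b - x) (x - a) t := by
  have hsub : ∀ t, intervalWeight (s - 1) a b (x - t) =
      intervalWeight (s - 1) (-(b - x)) (x - a) t := fun t => by
    unfold intervalWeight; congr 1; ring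
  have hadd : ∀ t, intervalWeight (s - 1) a b (x + t) =
      intervalWeight (s - 1) (-(x - a)) (b - x) t := fun t => by
    unfold intervalWeight; congr 1; ring
  rw [truncatedTransform_eq_sub (by linarith) (integrableOn_intervalWeight (by linarith) a b) hε
    hleft hright]
  simp only [hsub, hadd, oneSidedIntegrand]

lemma abs_truncatedTransform_intervalWeight_le (hs : 0 < s) (hs1 : s < 1) (hleft : η ≤ x - a)
    (hright : η ≤ b - x) (hε : 0 < ε) (hεη : 4 * ε ≤ η) :
    |truncatedTransform (-(2 * s)) a b (intervalWeight (s - 1) a b) ε x| ≤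
      2 ^ (2 * s) * ((η / 2) ^ 2) ^ (s - 1) * (2 / η) * ε ^ (2 - 2 * s) := by
  rw [truncatedTransform_intervalWeight hs hε (by linarith) (by linarith)]
  refine (abs_integral_oneSidedIntegrand_sub_le hs hs1 hleft hright hε hεη).trans_eq ?_
  rw [Real.div_rpow hε.le zero_le_two, Real.rpow_neg zero_le_two, Real.rpow_sub hε,
    Real.rpow_neg hε.le, Real.rpow_two]
  field_simp

lemma hasPrincipalValue_intervalWeight (hs : 0 < s) (hs1 : s < 1) (a b : ℝ) :
    HasPrincipalValue (-(2 * s)) a b (intervalWeight (s - 1) a b) fun _ => 0 := by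
  refine Metric.tendstoLocallyUniformlyOn_iff.2 fun δ hδ x₀ hx₀ => ?_
  obtain ⟨η, hη, hleft, hright⟩ : ∃ η > 0, 2 * η ≤ x₀ - a ∧ 2 * η ≤ b - x₀ := by
    refine ⟨min (x₀ - a) (b - x₀) / 2,
      half_pos (lt_min (sub_pos.2 hx₀.1) (sub_pos.2 hx₀.2)), ?_, ?_⟩ <;>
      linarith [min_le_left (x₀ - a) (b - x₀), min_le_right (x₀ - a) (b - x₀)]
  refine ⟨Metric.ball x₀ η, mem_nhdsWithin_of_mem_nhds (Metric.ball_mem_nhds x₀ hη), ?_⟩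
  have hrate := (tendsto_nhdsGT_rpow_zero (p := 2 - 2 * s) (by linarith)).const_mul
    (2 ^ (2 * s) * ((η / 2) ^ 2) ^ (s - 1) * (2 / η))
  rw [mul_zero] at hrate
  filter_upwards [self_mem_nhdsWithin, hrate.eventually_lt_const hδ,
    nhdsWithin_le_nhds (gt_mem_nhds (by linarith : 0 < η / 4))] with ε hε hsmall hεη x hx
  obtain ⟨hlower, hupper⟩ := abs_lt.1 (Metric.mem_ball.1 hx)
  rw [dist_zero_left]
  exact (abs_truncatedTransform_intervalWeight_le hs hs1 (by linarith) (by linarith) hε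
    (by linarith)).trans_lt hsmall

end WeightPrincipalValue

section PolynomialPotential

open Polynomial

variable {r a b : ℝ} {f : ℝ → ℝ}

lemma natDegree_mul_derivative_le {R : Type*} [Semiring R] (p q : R[X]) :
    (p * derivative q).natDegree ≤ p.natDegree + q.natDegree - 1 := by
  rcases Nat.eq_zero_or_pos q.natDegree with hq | hq
  · simp [derivative_of_natDegree_zero hq]
  · have hmul := natDegree_mul_le (p := p) (q := derivative q)
    have hderiv := natDegree_derivative_le q
    omega

lemma exists_derivative_eq {K : Type*} [Field K] [CharZero K] (g : K[X]) :
    ∃ G : K[X], derivative G = g ∧ G.natDegree ≤ g.natDegree + 1 := by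
  refine ⟨∑ i ∈ Finset.range (g.natDegree + 1), monomial (i + 1) (g.coeff i / (i + 1)), ?_,
    natDegree_sum_le_of_forall_le _ _ fun i hi => (natDegree_monomial_le _).trans
      (Finset.mem_range.1 hi)⟩
  conv_rhs => rw [g.as_sum_range]
  simp only [derivative_sum, derivative_monomial, Nat.cast_add_one, add_tsub_cancel_right]
  exact Finset.sum_congr rfl fun i _ => by rw [div_mul_cancel₀ _ i.cast_add_one_ne_zero]

lemma integrableOn_continuous_mul {φ : ℝ → ℝ} (hφ : Continuous φ) (hf : IntegrableOn f (Ioo a b)) :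
    IntegrableOn (fun y => φ y * f y) (Ioo a b) :=
  hf.continuousOn_mul_of_subset hφ.continuousOn isCompact_Icc measurableSet_Ioo Ioo_subset_Icc_self

lemma HasPrincipalValue.exists_rpowPotential_eq {G : ℝ[X]}
    (h : HasPrincipalValue r a b f fun x => (derivative G).eval x) (hr : -2 < r) (hr0 : r ≤ 0)
    (hf : IntegrableOn f (Ioo a b)) (hcont : ContinuousOn f (Ioo a b)) :
    ∃ k : ℝ, ∀ x ∈ Ioo a b, rpowPotential r a b f x = (G + C k).eval x := by
  have hderiv : ∀ x ∈ Ioo a b, HasDerivAt (fun x => rpowPotential r a b f x - G.eval x) 0 x :=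
    fun x hx => ((h.hasDerivAt_rpowPotential hr hr0 hf hcont hx).sub
      (G.hasDerivAt x)).congr_deriv (sub_self _)
  obtain ⟨k, hk⟩ := isOpen_Ioo.exists_is_const_of_deriv_eq_zero isPreconnected_Ioo
    (fun x hx => (hderiv x hx).differentiableAt.differentiableWithinAt)
    (fun x hx => (hderiv x hx).deriv)
  exact ⟨k, fun x hx => by rw [eval_add, eval_C, ← hk x hx, add_sub_cancel]⟩

lemma HasPrincipalValue.exists_id_mul {G : ℝ[X]}
    (h : HasPrincipalValue r a b f fun x => (derivative G).eval x) (hr : -2 < r) (hr0 : r ≤ 0)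
    (hf : IntegrableOn f (Ioo a b)) (hcont : ContinuousOn f (Ioo a b)) :
    ∃ H : ℝ[X], H.natDegree ≤ G.natDegree + 1 ∧
      HasPrincipalValue r a b (fun y => y * f y) fun x => (derivative H).eval x := by
  obtain ⟨k, hk⟩ := h.exists_rpowPotential_eq hr hr0 hf hcont
  set g : ℝ[X] := X * derivative G -
    (C ((b - a) ^ (r + 1) * ∫ y in Ioo a b, f y) + C (r + 1) * (G + C k)) with hg
  have hgdeg : g.natDegree ≤ G.natDegree := by
    refine (natDegree_sub_le _ _).trans (max_le ?_ ?_)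
    · simpa using natDegree_mul_derivative_le X G
    · rw [natDegree_C_add]
      exact (natDegree_C_mul_le _ _).trans natDegree_add_C.le
  obtain ⟨H, hH, hHdeg⟩ := exists_derivative_eq g
  refine ⟨H, hHdeg.trans (by gcongr), ?_⟩
  refine (h.id_mul hr hr0 hf hcont (integrableOn_continuous_mul continuous_id hf)
    (derivative G).continuous.continuousOn).congr_right fun x hx => ?_
  simp only [hH, hg, hk x hx, eval_sub, eval_add, eval_mul, eval_X, eval_C]

lemma HasPrincipalValue.exists_eval_mul (h : HasPrincipalValue r a b f fun _ => 0) (hr : -2 < r)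
    (hr0 : r ≤ 0) (hf : IntegrableOn f (Ioo a b)) (hcont : ContinuousOn f (Ioo a b)) (p : ℝ[X]) :
    ∃ G : ℝ[X], G.natDegree ≤ p.natDegree ∧
      HasPrincipalValue r a b (fun y => p.eval y * f y) fun x => (derivative G).eval x := by
  induction p using Polynomial.recOnHorner with
  | M0 => exact ⟨0, le_rfl, by simpa using h.const_mul 0⟩
  | MC p c _ _ ih =>
    obtain ⟨G, hGdeg, hG⟩ := ih
    refine ⟨G, by rwa [natDegree_add_C], ?_⟩
    simpa only [eval_add, eval_C, add_mul, mul_zero, add_zero] using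
      hG.add (h.const_mul c) hr0 (integrableOn_continuous_mul p.continuous hf) (hf.const_mul c)
  | MX p hp ih =>
    obtain ⟨G, hGdeg, hG⟩ := ih
    obtain ⟨H, hHdeg, hH⟩ := hG.exists_id_mul hr hr0 (integrableOn_continuous_mul p.continuous hf)
      (p.continuous.continuousOn.mul hcont)
    refine ⟨H, by rw [natDegree_mul_X hp]; exact hHdeg.trans (by gcongr), ?_⟩
    simpa only [eval_mul, eval_X, mul_comm (eval _ p), mul_assoc] using hH

lemma HasPrincipalValue.exists_polynomial_rpowPotential
    (h : HasPrincipalValue r a b f fun _ => 0) (hr : -2 < r) (hr0 : r ≤ 0)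
    (hf : IntegrableOn f (Ioo a b)) (hcont : ContinuousOn f (Ioo a b)) (p : ℝ[X]) :
    ∃ G : ℝ[X], G.natDegree ≤ p.natDegree ∧
      (∀ x ∈ Ioo a b, rpowPotential r a b (fun y => p.eval y * f y) x = G.eval x) ∧
      HasPrincipalValue r a b (fun y => p.eval y * f y) fun x => (derivative G).eval x := by
  obtain ⟨G, hGdeg, hG⟩ := h.exists_eval_mul hr hr0 hf hcont p
  obtain ⟨k, hk⟩ := hG.exists_rpowPotential_eq hr hr0
    (integrableOn_continuous_mul p.continuous hf) (p.continuous.continuousOn.mul hcont)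
  exact ⟨G + C k, by rwa [natDegree_add_C], hk, by simpa using hG⟩

lemma integrableOn_prod_rpowPrimitive_mul (hr : -2 < r) (hf : IntegrableOn f (Ioo a b))
    (hcont : ContinuousOn f (Ioo a b)) (hnonneg : ∀ y ∈ Ioo a b, 0 ≤ f y)
    (hpotential : IntegrableOn (fun x => rpowPotential r a b f x * f x) (Ioo a b)) :
    IntegrableOn (fun z : ℝ × ℝ => rpowPrimitive r (b - a) |z.1 - z.2| * f z.2 * f z.1)
      (Ioo a b ×ˢ Ioo a b) (volume.prod volume) := by
  have hkernel : Measurable fun z : ℝ × ℝ => rpowPrimitive r (b - a) |z.1 - z.2| :=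
    (measurable_rpowPrimitive r (b - a)).comp (by fun_prop)
  have hmeas : AEStronglyMeasurable
      (fun z : ℝ × ℝ => rpowPrimitive r (b - a) |z.1 - z.2| * f z.2 * f z.1)
      ((volume.restrict (Ioo a b)).prod (volume.restrict (Ioo a b))) :=
    (hkernel.aestronglyMeasurable.mul hf.aestronglyMeasurable.comp_snd).mul
      hf.aestronglyMeasurable.comp_fst
  rw [IntegrableOn, ← Measure.prod_restrict, integrable_prod_iff hmeas]
  constructor
  · filter_upwards [ae_restrict_mem measurableSet_Ioo] with x hx
    exact (integrableOn_rpowPrimitive_mul hr hf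
      (hcont.continuousAt (Ioo_mem_nhds hx.1 hx.2)) hx).mul_const _
  · refine hpotential.neg.congr ?_
    filter_upwards [ae_restrict_mem measurableSet_Ioo] with x hx
    rw [Pi.neg_apply, rpowPotential, ← integral_mul_const, ← integral_neg]
    refine integral_congr_ae ?_
    filter_upwards [ae_restrict_ne x (Ioo a b), ae_restrict_mem measurableSet_Ioo] with y hne hy
    have hsign : rpowPrimitive r (b - a) |x - y| ≤ 0 :=
      rpowPrimitive_nonpos (abs_pos.2 (sub_ne_zero.2 hne.symm)) (abs_sub_lt_of_mem_Ioo hx hy).le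
    exact (Real.norm_of_nonpos (mul_nonpos_of_nonpos_of_nonneg
      (mul_nonpos_of_nonpos_of_nonneg hsign (hnonneg y hy)) (hnonneg x hx))).symm

lemma integral_rpowPotential_continuous_mul_comm {φ ψ : ℝ → ℝ} (hφ : Continuous φ)
    (hψ : Continuous ψ) (hr : -2 < r) (hf : IntegrableOn f (Ioo a b))
    (hcont : ContinuousOn f (Ioo a b)) (hnonneg : ∀ y ∈ Ioo a b, 0 ≤ f y)
    (hpotential : IntegrableOn (fun x => rpowPotential r a b f x * f x) (Ioo a b)) :
    ∫ x in Ioo a b, rpowPotential r a b (fun y => φ y * f y) x * (ψ x * f x) =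
      ∫ x in Ioo a b, φ x * f x * rpowPotential r a b (fun y => ψ y * f y) x := by
  refine integral_rpowPotential_mul_comm (IntegrableOn.congr_fun
    ((integrableOn_prod_rpowPrimitive_mul hr hf hcont hnonneg hpotential).continuousOn_mul_of_subset
      (g := fun z => φ z.2 * ψ z.1) (K := Icc a b ×ˢ Icc a b) (by fun_prop)
      (isCompact_Icc.prod isCompact_Icc) (measurableSet_Ioo.prod measurableSet_Ioo)
      (prod_mono Ioo_subset_Icc_self Ioo_subset_Icc_self)) (fun z _ => ?_)
    (measurableSet_Ioo.prod measurableSet_Ioo))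
  ring

end PolynomialPotential

section WeightedLaplacian

open Polynomial

variable {s α a b x : ℝ}

/-- The polynomial factor of the derivative: `((y - a) (b - y)) ^ α * p` has derivative
`((y - a) (b - y)) ^ (α - 1) * weightDerivPoly α a b p`. -/
noncomputable def weightDerivPoly (α a b : ℝ) (p : ℝ[X]) : ℝ[X] :=
  C α * (p * derivative ((X - C a) * (C b - X))) + (X - C a) * (C b - X) * derivative p

lemma natDegree_weightDerivPoly_le (α a b : ℝ) (p : ℝ[X]) :
    (weightDerivPoly α a b p).natDegree ≤ p.natDegree + 1 := by
  have hbase : ((X - C a) * (C b - X)).natDegree ≤ 2 := by compute_degree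
  have hleft := natDegree_mul_derivative_le p ((X - C a) * (C b - X))
  have hright := natDegree_mul_derivative_le ((X - C a) * (C b - X)) p
  refine (natDegree_add_le _ _).trans (max_le ((natDegree_C_mul_le _ _).trans ?_) ?_) <;> omega

lemma hasDerivAt_eval_mul_intervalWeight (α : ℝ) (p : ℝ[X]) (hx : x ∈ Ioo a b) :
    HasDerivAt (fun y => p.eval y * intervalWeight α a b y)
      ((weightDerivPoly α a b p).eval x * intervalWeight (α - 1) a b x) x := by
  have hbase : HasDerivAt (fun y => (y - a) * (b - y))
      ((derivative ((X - C a) * (C b - X))).eval x) x :=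
    (Polynomial.hasDerivAt _ x).congr_of_eventuallyEq (.of_forall fun y => by
      simp only [eval_mul, eval_sub, eval_X, eval_C])
  have hpos := intervalWeight_base_pos hx
  have hpow : intervalWeight α a b x = (x - a) * (b - x) * intervalWeight (α - 1) a b x := by
    rw [intervalWeight, intervalWeight, Real.rpow_sub_one hpos.ne', mul_div_cancel₀ _ hpos.ne']
  refine ((p.hasDerivAt x).mul (hbase.rpow_const (p := α) (Or.inl hpos.ne'))).congr_deriv ?_
  change _ * intervalWeight α a b x + _ * (_ * _ * intervalWeight (α - 1) a b x) = _
  rw [hpow]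
  simp only [weightDerivPoly, eval_add, eval_mul, eval_sub, eval_X, eval_C]
  ring

lemma intervalWeight_left (hα : α ≠ 0) (a b : ℝ) : intervalWeight α a b a = 0 := by
  simp [intervalWeight, hα]

lemma intervalWeight_right (hα : α ≠ 0) (a b : ℝ) : intervalWeight α a b b = 0 := by
  simp [intervalWeight, hα]

lemma continuous_intervalWeight (hα : 0 ≤ α) (a b : ℝ) : Continuous (intervalWeight α a b) :=
  Continuous.rpow_const (by fun_prop) fun _ => Or.inr hα

lemma integral_mul_weightDerivPoly (hα : 0 < α) (hab : a < b) (q : ℝ[X]) {G G' : ℝ → ℝ}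
    (hG : ∀ x, HasDerivAt G (G' x) x) (hG' : Continuous G') :
    ∫ x in Ioo a b, G x * ((weightDerivPoly α a b q).eval x * intervalWeight (α - 1) a b x) =
      -∫ x in Ioo a b, G' x * (q.eval x * intervalWeight α a b x) := by
  have hparts := intervalIntegral.integral_mul_deriv_eq_deriv_mul_of_hasDerivAt (a := a) (b := b)
    (v := fun y => q.eval y * intervalWeight α a b y)
    (fun x _ => (hG x).continuousAt.continuousWithinAt)
    (q.continuous.mul (continuous_intervalWeight hα.le a b)).continuousOn (fun x _ => hG x)
    (fun x hx => hasDerivAt_eval_mul_intervalWeight α q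
      (by rwa [min_eq_left hab.le, max_eq_right hab.le] at hx))
    (hG'.intervalIntegrable a b)
    ((intervalIntegrable_iff_integrableOn_Ioo_of_le hab.le).2
      (integrableOn_continuous_mul (weightDerivPoly α a b q).continuous
        (integrableOn_intervalWeight (by linarith) a b)))
  simpa only [intervalWeight_left hα.ne', intervalWeight_right hα.ne', mul_zero, sub_self,
    zero_sub, intervalIntegral.integral_of_le hab.le, integral_Ioc_eq_integral_Ioo] using hparts

lemma WFL_iff_tendsto_truncatedTransform (s a b : ℝ) (p : ℝ[X]) (x L : ℝ) :
    WFL s a b (fun t => p.eval t) x L ↔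
      Tendsto (fun ε => C1 s / (2 * s) * truncatedTransform (-(2 * s)) a b
        (fun y => (weightDerivPoly s a b p).eval y * intervalWeight (s - 1) a b y) ε x)
        (nhdsWithin 0 (Ioi 0)) (nhds L) := by
  have hderiv : ∀ y ∈ Ioo a b, deriv (fun t => (t - a) ^ s * (b - t) ^ s * p.eval t) y =
      (weightDerivPoly s a b p).eval y * intervalWeight (s - 1) a b y := fun y hy => by
    refine ((hasDerivAt_eval_mul_intervalWeight s p hy).congr_of_eventuallyEq ?_).deriv
    filter_upwards [Ioo_mem_nhds hy.1 hy.2] with t ht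
    rw [intervalWeight_eq_mul (Ioo_subset_Icc_self ht), mul_comm]
  refine tendsto_congr fun ε => congrArg _ ?_
  refine setIntegral_congr_fun (measurableSet_Ioo.diff measurableSet_Ioo) fun y hy => ?_
  rw [hderiv y hy.1, oddRpow]

lemma exists_polynomial_WFL (hs : s ∈ Ioo (0 : ℝ) 1) (a b : ℝ) (p : ℝ[X]) :
    ∃ G : ℝ[X], G.natDegree ≤ p.natDegree + 1 ∧
      (∀ x ∈ Ioo a b, rpowPotential (-(2 * s)) a b
        (fun y => (weightDerivPoly s a b p).eval y * intervalWeight (s - 1) a b y) x = G.eval x) ∧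
      ∀ x ∈ Ioo a b, WFL s a b (fun t => p.eval t) x
        (C1 s / (2 * s) * (derivative G).eval x) := by
  obtain ⟨hs0, hs1⟩ := hs
  obtain ⟨G, hGdeg, hpotential, hG⟩ :=
    (hasPrincipalValue_intervalWeight hs0 hs1 a b).exists_polynomial_rpowPotential (by linarith)
      (by linarith) (integrableOn_intervalWeight (by linarith) a b)
      (continuousOn_intervalWeight (s - 1) a b) (weightDerivPoly s a b p)
  refine ⟨G, hGdeg.trans (natDegree_weightDerivPoly_le s a b p), hpotential, fun x hx => ?_⟩
  exact (WFL_iff_tendsto_truncatedTransform s a b p x _).2 ((hG.tendsto_at hx).const_mul _)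

-- `P` is the derivative of a potential, and the weight vanishes at the ends of the interval.
lemma integral_WFL_mul (hs : s ∈ Ioo (0 : ℝ) 1) (hab : a < b) {p : ℝ[X]} {P : ℝ → ℝ}
    (hP : ∀ x ∈ Ioo a b, WFL s a b (fun t => p.eval t) x (P x)) (q : ℝ[X]) :
    ∫ x in Ioo a b, P x * q.eval x * ((x - a) ^ s * (b - x) ^ s) =
      -(C1 s / (2 * s)) * ∫ x in Ioo a b, rpowPotential (-(2 * s)) a b
        (fun y => (weightDerivPoly s a b p).eval y * intervalWeight (s - 1) a b y) x *
          ((weightDerivPoly s a b q).eval x * intervalWeight (s - 1) a b x) := by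
  obtain ⟨G, -, hpotential, hG⟩ := exists_polynomial_WFL hs a b p
  have hP_eq : ∀ x ∈ Ioo a b, P x = C1 s / (2 * s) * (derivative G).eval x := fun x hx =>
    tendsto_nhds_unique (hP x hx) (hG x hx)
  calc ∫ x in Ioo a b, P x * q.eval x * ((x - a) ^ s * (b - x) ^ s)
      = ∫ x in Ioo a b, C1 s / (2 * s) *
          ((derivative G).eval x * (q.eval x * intervalWeight s a b x)) :=
        setIntegral_congr_fun measurableSet_Ioo fun x hx => by
          simp only [hP_eq x hx, intervalWeight_eq_mul (Ioo_subset_Icc_self hx), mul_assoc]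
    _ = -(C1 s / (2 * s)) * ∫ x in Ioo a b,
          G.eval x * ((weightDerivPoly s a b q).eval x * intervalWeight (s - 1) a b x) := by
        rw [integral_const_mul, integral_mul_weightDerivPoly hs.1 hab q G.hasDerivAt
          (derivative G).continuous, neg_mul_neg]
    _ = _ := congrArg _ (setIntegral_congr_fun measurableSet_Ioo fun x hx => by
        simp only [hpotential x hx])

lemma integral_rpowPotential_intervalWeight_comm (hs : s ∈ Ioo (0 : ℝ) 1) (a b : ℝ)
    {φ ψ : ℝ → ℝ} (hφ : Continuous φ) (hψ : Continuous ψ) :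
    ∫ x in Ioo a b, rpowPotential (-(2 * s)) a b (fun y => φ y * intervalWeight (s - 1) a b y) x *
        (ψ x * intervalWeight (s - 1) a b x) =
      ∫ x in Ioo a b, φ x * intervalWeight (s - 1) a b x *
        rpowPotential (-(2 * s)) a b (fun y => ψ y * intervalWeight (s - 1) a b y) x := by
  obtain ⟨hs0, hs1⟩ := hs
  have hweight : IntegrableOn (intervalWeight (s - 1) a b) (Ioo a b) :=
    integrableOn_intervalWeight (by linarith) a b
  have hcont := continuousOn_intervalWeight (s - 1) a b
  obtain ⟨G, -, hG, -⟩ := (hasPrincipalValue_intervalWeight hs0 hs1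
    a b).exists_polynomial_rpowPotential (by linarith) (by linarith) hweight hcont 1
  simp only [eval_one, one_mul] at hG
  exact integral_rpowPotential_continuous_mul_comm hφ hψ (by linarith) hweight hcont
    (fun y hy => intervalWeight_nonneg (Ioo_subset_Icc_self hy))
    ((integrableOn_continuous_mul G.continuous hweight).congr_fun
      (fun x hx => by simp only [hG x hx]) measurableSet_Ioo)

end WeightedLaplacian

theorem stmt10 (s a b : ℝ) (hs : s ∈ Set.Ioo (0 : ℝ) 1) (hab : a < b) (n : ℕ) :
    (∀ p : Polynomial ℝ, p.natDegree ≤ n →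
      ∃ q : Polynomial ℝ, q.natDegree ≤ n ∧
        ∀ x ∈ Set.Ioo a b, WFL s a b (fun t => p.eval t) x (q.eval x)) ∧
    (∀ p q : Polynomial ℝ, p.natDegree ≤ n → q.natDegree ≤ n →
      ∀ P Q : ℝ → ℝ,
        (∀ x ∈ Set.Ioo a b, WFL s a b (fun t => p.eval t) x (P x)) →
        (∀ x ∈ Set.Ioo a b, WFL s a b (fun t => q.eval t) x (Q x)) →
        ∫ x in Set.Ioo a b, P x * q.eval x * ((x - a) ^ s * (b - x) ^ s) =
          ∫ x in Set.Ioo a b, p.eval x * Q x * ((x - a) ^ s * (b - x) ^ s)) := by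
  constructor
  · intro p hp
    obtain ⟨G, hGdeg, -, hG⟩ := exists_polynomial_WFL hs a b p
    refine ⟨Polynomial.C (C1 s / (2 * s)) * Polynomial.derivative G, ?_, fun x hx => ?_⟩
    · have hderiv := Polynomial.natDegree_derivative_le G
      exact (Polynomial.natDegree_C_mul_le _ _).trans (by omega)
    · simpa only [Polynomial.eval_C_mul] using hG x hx
  · intro p q _ _ P Q hP hQ
    simp only [mul_comm (Polynomial.eval _ p) (Q _)]
    rw [integral_WFL_mul hs hab hP q, integral_WFL_mul hs hab hQ p,
      integral_rpowPotential_intervalWeight_comm hs a b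
        (weightDerivPoly s a b p).continuous (weightDerivPoly s a b q).continuous]
    simp only [mul_comm (rpowPotential _ _ _ _ _)]
end
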